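/- P-type setup: let κ₁ < κ₂ < κ₃ < κ₄ with κ₂+κ₃ ≠ κ₁+κ₄; a₂₃ = (κ₂+κ₃)/2, a₁₄ = (κ₁+κ₄)/2, c₂₃ = (κ₃−κ₂)²/4, c₁₄ = (κ₄−κ₁)²/4; let (b₁,b₂) be the unique solution of b₁ + 2a₂₃b₂ = ω₂₃, b₁ + 2a₁₄b₂ = ω₁₄ with ω_{ij} = κᵢ²+κᵢκⱼ+κⱼ². Define θⱼ(X,Y) := κⱼX + κⱼ²Y, T(X,Y) := (κ₂−κ₁)e^{θ₁+θ₂} + (κ₃−κ₁)e^{θ₁+θ₃} + (κ₄−κ₂)e^{θ₂+θ₄} + (κ₄−κ₃)e^{θ₃+θ₄} (which is everywhere positive), u₂ := 2∂_X² log T, and z₁ := X + 2a₂₃Y. Assume 0 < α < min{√c₂₃, | |b₂ − 3a₁₄| − √c₁₄ |}. If U₂ : ℝ² → ℂ is measurable with ∫∫ |U₂(X,Y)|² e^{2αz₁} dXdY < ∞ and satisfies, in the sense of distributions, 3∂_Y²U₂ − 4b₂∂_X∂_YU₂ + ∂_X²(∂_X²U₂ − 4b₁U₂ + 6u₂U₂)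 = 0 (i.e. ∫∫ U₂·(3∂_Y²ψ − 4b₂∂_X∂_Yψ + ∂_X⁴ψ − 4b₁∂_X²ψ) + 6u₂U₂·∂_X²ψ dXdY = 0 for every smooth compactly supported ψ), then U₂ = 0 almost everywhere. -/

import Mathlib

open MeasureTheory

noncomputable def pX {E : Type*} [NormedAddCommGroup E] [NormedSpace ℝ E]
    (f : ℝ → ℝ → E) : ℝ → ℝ → E :=
  fun x y => deriv (fun s => f s y) x

noncomputable def pY {E : Type*} [NormedAddCommGroup E] [NormedSpace ℝ E]
    (f : ℝ → ℝ → E) : ℝ → ℝ → E :=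
  fun x y => deriv (fun s => f x s) y

/-- τ-function of the stationary P-type 2-line soliton -/
noncomputable def Ptau (κ₁ κ₂ κ₃ κ₄ : ℝ) (X Y : ℝ) : ℝ :=
  (κ₂ - κ₁) * Real.exp ((κ₁ + κ₂)*X + (κ₁^2 + κ₂^2)*Y)
  + (κ₃ - κ₁) * Real.exp ((κ₁ + κ₃)*X + (κ₁^2 + κ₃^2)*Y)
  + (κ₄ - κ₂) * Real.exp ((κ₂ + κ₄)*X + (κ₂^2 + κ₄^2)*Y)
  + (κ₄ - κ₃) * Real.exp ((κ₃ + κ₄)*X + (κ₃^2 + κ₄^2)*Y)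

/-- the stationary P-type 2-line soliton u₂ = 2∂_X² log T -/
noncomputable def Pu2 (κ₁ κ₂ κ₃ κ₄ : ℝ) (X Y : ℝ) : ℝ :=
  2 * pX (pX fun a b => Real.log (Ptau κ₁ κ₂ κ₃ κ₄ a b)) X Y

/-!
The linearized operator at a KP-II soliton is treated algebraically, as an operator on a module
of generalized functions with a flat connection `(∇_X, ∇_Y)`; conjugation by the weight `e^{αz₁}`
only shifts the connection. Write the null vector as `∇_X² W`. A Darboux transformation, which adds
one soliton to the potential, factorises the Lax operators, and the linearized operators at the two
potentials then differ by terms that factor through the adjoint Lax operators. Solving one adjoint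
Lax system therefore turns a null vector `W` at the new potential into a null vector `W + R` at the
old one; if the latter vanishes, `W = -R` and the product of `R` with the eigenfunction defining the
transformation lies in the joint kernel of the old Lax pair. In the weighted space the systems are
solvable and the joint kernels are trivial, because the exponents of the eigenfunctions never differ
by the weight `α`. Hence injectivity passes from the old potential to the new one. Two such steps
lead from the zero potential, where the Fourier symbol vanishes only on a null set, through the
`[2,3]`-line soliton to the P-type soliton, whose factorised `τ`-function `(e^{θ₂} + e^{θ₃})(e^{θ₁}
+ e^{θ₄})h` exhibits it as a Darboux transform with `h` bounded below.
-/

/-! ### Flat connections and the Lax pair -/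

lemma derivation_map_ofNat {R A : Type*} [CommRing R] [CommRing A] [Algebra R A]
    (D : Derivation R A A) (n : ℕ) [n.AtLeastTwo] : D (ofNat(n) : A) = 0 := by
  rw [← Nat.cast_ofNat, D.map_natCast]

/-- Two commuting derivations of a coefficient algebra, standing for `∂_X` and `∂_Y`. -/
structure DerivationPair (𝕜 C : Type*) [CommRing 𝕜] [CommRing C] [Algebra 𝕜 C] where
  dx : Derivation 𝕜 C C
  dy : Derivation 𝕜 C C
  comm : ∀ c, dx (dy c) = dy (dx c)

/-- A flat connection `(∇_X, ∇_Y)` on a module of generalized functions over the coefficients. -/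
structure FlatConnection {𝕜 C : Type*} [CommRing 𝕜] [CommRing C] [Algebra 𝕜 C]
    (d : DerivationPair 𝕜 C) (M : Type*) [AddCommGroup M] [Module 𝕜 M] [Module C M] where
  X : Module.End 𝕜 M
  Y : Module.End 𝕜 M
  comm : ∀ m, X (Y m) = Y (X m)
  X_smul : ∀ (c : C) m, X (c • m) = d.dx c • m + c • X m
  Y_smul : ∀ (c : C) m, Y (c • m) = d.dy c • m + c • Y m

section LaxPair
variable {𝕜 C M : Type*} [CommRing 𝕜] [CommRing C] [Algebra 𝕜 C] {d : DerivationPair 𝕜 C}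

/-- The closed one-forms `q dX + j dY`, encoded as pairs `(q, j)`. -/
def closedForms (d : DerivationPair 𝕜 C) : Submodule 𝕜 (C × C) where
  carrier := {η | d.dx η.2 = d.dy η.1}
  add_mem' hη hη' := by simp_all
  zero_mem' := by simp
  smul_mem' c η hη := by simp_all

/-- `dlog g = η`, written without dividing by `g`. -/
def HasDlog (g : C) (η : closedForms d) : Prop :=
  d.dx g = g * η.1.1 ∧ d.dy g = g * η.1.2

lemma HasDlog.mul {g g' : C} {η η' : closedForms d} (hg : HasDlog g η) (hg' : HasDlog g' η') :
    HasDlog (g * g') (η + η') := by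
  constructor <;> simp only [Derivation.leibniz, smul_eq_mul, hg.1, hg.2, hg'.1, hg'.2,
    Submodule.coe_add, Prod.fst_add, Prod.snd_add] <;> ring

lemma HasDlog.of_mul_eq_one {g h : C} {η : closedForms d} (hh : HasDlog h η) (hgh : g * h = 1) :
    HasDlog g (-η) := by
  constructor
  · rw [Derivation.leibniz_of_mul_eq_one _ hgh, smul_eq_mul, hh.1, Submodule.coe_neg, Prod.fst_neg]
    linear_combination (-g * η.1.1) * hgh
  · rw [Derivation.leibniz_of_mul_eq_one _ hgh, smul_eq_mul, hh.2, Submodule.coe_neg, Prod.snd_neg]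
    linear_combination (-g * η.1.2) * hgh

variable [AddCommGroup M] [Module 𝕜 M] [Module C M] [IsScalarTower 𝕜 C M]

/-- The connection `∇ + η`. -/
def FlatConnection.gauge (D : FlatConnection d M) (η : closedForms d) : FlatConnection d M where
  X := D.X + η.1.1 • 1
  Y := D.Y + η.1.2 • 1
  comm m := by
    have closed : d.dx η.1.2 = d.dy η.1.1 := η.2
    simp only [LinearMap.add_apply, LinearMap.smul_apply, Module.End.one_apply, map_add, D.comm,
      D.X_smul, D.Y_smul, closed, smul_smul, mul_comm]
    abel
  X_smul c m := by
    simp only [LinearMap.add_apply, LinearMap.smul_apply, Module.End.one_apply, D.X_smul, smul_add,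
      smul_smul, mul_comm]
    abel
  Y_smul c m := by
    simp only [LinearMap.add_apply, LinearMap.smul_apply, Module.End.one_apply, D.Y_smul, smul_add,
      smul_smul, mul_comm]
    abel

lemma FlatConnection.gauge_X_apply (D : FlatConnection d M) (η : closedForms d) (m : M) :
    (D.gauge η).X m = D.X m + η.1.1 • m := rfl

lemma FlatConnection.gauge_Y_apply (D : FlatConnection d M) (η : closedForms d) (m : M) :
    (D.gauge η).Y m = D.Y m + η.1.2 • m := rfl

lemma FlatConnection.gauge_gauge (D : FlatConnection d M) (η η' : closedForms d) :
    (D.gauge η).gauge η' = D.gauge (η + η') := by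
  simp only [FlatConnection.gauge, add_assoc, ← add_smul, Submodule.coe_add, Prod.fst_add,
    Prod.snd_add]

lemma FlatConnection.gauge_zero (D : FlatConnection d M) : D.gauge 0 = D := by
  simp [FlatConnection.gauge]

lemma HasDlog.gauge_X_smul {g : C} {η η' : closedForms d} (hg : HasDlog g (η - η'))
    (D : FlatConnection d M) (m : M) : (D.gauge η').X (g • m) = g • (D.gauge η).X m := by
  simp only [FlatConnection.gauge_X_apply, D.X_smul, hg.1, Submodule.coe_sub, Prod.fst_sub]
  module

lemma HasDlog.gauge_Y_smul {g : C} {η η' : closedForms d} (hg : HasDlog g (η - η'))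
    (D : FlatConnection d M) (m : M) : (D.gauge η').Y (g • m) = g • (D.gauge η).Y m := by
  simp only [FlatConnection.gauge_Y_apply, D.Y_smul, hg.2, Submodule.coe_sub, Prod.snd_sub]
  module

/-- The heat operator `∂_Y - ∂_X² - u` of the Lax pair. -/
def heat (D : FlatConnection d M) (u : C) : Module.End 𝕜 M :=
  D.Y - D.X ^ 2 - u • 1

/-- The formal adjoint of `heat`, up to sign. -/
def heatAdjoint (D : FlatConnection d M) (u : C) : Module.End 𝕜 M :=
  D.Y + D.X ^ 2 + u • 1

/-- Twice the third-order operator of the stationary Lax pair; the spectral parameter is absorbed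
in the zeroth-order coefficient `w`. -/
def lax (D : FlatConnection d M) (b₁ b₂ : 𝕜) (u w : C) : Module.End 𝕜 M :=
  (2 : 𝕜) • D.X ^ 3 + (3 * u) • D.X + w • 1 - (2 * b₁) • D.X - (2 * b₂) • (D.X ^ 2 + u • 1)

/-- The formal adjoint of `lax`. -/
def laxAdjoint (D : FlatConnection d M) (b₁ b₂ : 𝕜) (u w : C) : Module.End 𝕜 M :=
  -((2 : 𝕜) • D.X ^ 3) - (3 : 𝕜) • (D.X * u • 1) + w • 1 + (2 * b₁) • D.X
    - (2 * b₂) • (D.X ^ 2 + u • 1)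

/-- The stationary linearized KP-II operator acting on second `X`-antiderivatives. -/
def linearizedKP (D : FlatConnection d M) (b₁ b₂ : 𝕜) (u : C) : Module.End 𝕜 M :=
  (3 : 𝕜) • D.Y ^ 2 - (4 * b₂) • (D.Y * D.X) + D.X ^ 4 - (4 * b₁) • D.X ^ 2 + (6 * u) • D.X ^ 2

/-- The source term that a null vector of `linearizedKP` contributes to the adjoint Lax system of
its Darboux transform. -/
def darbouxSource (D : FlatConnection d M) (b₂ : 𝕜) (q : C) : Module.End 𝕜 M :=
  -((3 : 𝕜) • D.X ^ 3) + (6 * q) • D.X ^ 2 + (3 : 𝕜) • (D.Y * D.X) - (4 * b₂) • D.X ^ 2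

lemma heatAdjoint_apply (D : FlatConnection d M) (u : C) (m : M) :
    heatAdjoint D u m = D.Y m + D.X (D.X m) + u • m := rfl

lemma heat_apply (D : FlatConnection d M) (u : C) (m : M) :
    heat D u m = D.Y m - D.X (D.X m) - u • m := rfl

lemma lax_apply (D : FlatConnection d M) (b₁ b₂ : 𝕜) (u w : C) (m : M) :
    lax D b₁ b₂ u w m = (2 : 𝕜) • D.X (D.X (D.X m)) + (3 * u) • D.X m + w • m
      - (2 * b₁) • D.X m - (2 * b₂) • (D.X (D.X m) + u • m) := rfl

lemma laxAdjoint_apply (D : FlatConnection d M) (b₁ b₂ : 𝕜) (u w : C) (m : M) :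
    laxAdjoint D b₁ b₂ u w m = -((2 : 𝕜) • D.X (D.X (D.X m))) - (3 : 𝕜) • D.X (u • m) + w • m
      + (2 * b₁) • D.X m - (2 * b₂) • (D.X (D.X m) + u • m) := rfl

lemma linearizedKP_apply (D : FlatConnection d M) (b₁ b₂ : 𝕜) (u : C) (m : M) :
    linearizedKP D b₁ b₂ u m = (3 : 𝕜) • D.Y (D.Y m) - (4 * b₂) • D.Y (D.X m)
      + D.X (D.X (D.X (D.X m))) - (4 * b₁) • D.X (D.X m) + (6 * u) • D.X (D.X m) := rfl

lemma darbouxSource_apply (D : FlatConnection d M) (b₂ : 𝕜) (q : C) (m : M) :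
    darbouxSource D b₂ q m = -((3 : 𝕜) • D.X (D.X (D.X m))) + (6 * q) • D.X (D.X m)
      + (3 : 𝕜) • D.Y (D.X m) - (4 * b₂) • D.X (D.X m) := rfl

lemma linearizedKP_zero (D : FlatConnection d M) (b₁ b₂ : 𝕜) : linearizedKP D b₁ b₂ 0 =
    (3 : 𝕜) • D.Y ^ 2 - (4 * b₂) • (D.Y * D.X) + D.X ^ 4 - (4 * b₁) • D.X ^ 2 := by
  simp [linearizedKP]

/-- The conditions on the coefficients under which the two operators of the Lax pair commute. -/
structure LaxCompatible (d : DerivationPair 𝕜 C) (b₁ b₂ : 𝕜) (u w : C) : Prop where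
  dx_w : 2 * d.dx w = 3 * (d.dx (d.dx u) + d.dy u)
  dy_w : d.dy w = d.dx (d.dx (d.dx u)) - 3 * u * d.dx u + 2 * algebraMap 𝕜 C b₁ * d.dx u
    + 3 * d.dy (d.dx u) - d.dx (d.dx w) + 2 * algebraMap 𝕜 C b₂ * d.dy u

lemma LaxCompatible.commute_laxAdjoint_heatAdjoint {b₁ b₂ : 𝕜} {u w : C}
    (h : LaxCompatible d b₁ b₂ u w) (D : FlatConnection d M) :
    Commute (laxAdjoint D b₁ b₂ u w) (heatAdjoint D u) := by
  obtain ⟨hwx, hwy⟩ := h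
  ext m
  simp only [Module.End.mul_apply, laxAdjoint_apply, heatAdjoint_apply, map_add, map_sub, map_neg,
    map_smul, D.X_smul, D.Y_smul, D.comm]
  match_scalars
  all_goals try simp only [map_ofNat]
  all_goals first | ring1 | linear_combination -hwy | linear_combination -hwx

lemma HasDlog.laxAdjoint_smul {g : C} {η η' : closedForms d} (hg : HasDlog g (η - η'))
    (D : FlatConnection d M) (b₁ b₂ : 𝕜) (u w : C) (m : M) :
    laxAdjoint (D.gauge η') b₁ b₂ u w (g • m) = g • laxAdjoint (D.gauge η) b₁ b₂ u w m := by
  simp only [laxAdjoint_apply, smul_comm u g, hg.gauge_X_smul]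
  module

lemma HasDlog.heatAdjoint_smul {g : C} {η η' : closedForms d} (hg : HasDlog g (η - η'))
    (D : FlatConnection d M) (u : C) (m : M) :
    heatAdjoint (D.gauge η') u (g • m) = g • heatAdjoint (D.gauge η) u m := by
  simp only [heatAdjoint_apply, hg.gauge_X_smul, hg.gauge_Y_smul]
  module

lemma HasDlog.lax_smul {g : C} {η η' : closedForms d} (hg : HasDlog g (η - η'))
    (D : FlatConnection d M) (b₁ b₂ : 𝕜) (u w : C) (m : M) :
    lax (D.gauge η') b₁ b₂ u w (g • m) = g • lax (D.gauge η) b₁ b₂ u w m := by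
  simp only [lax_apply, hg.gauge_X_smul]
  module

lemma HasDlog.heat_smul {g : C} {η η' : closedForms d} (hg : HasDlog g (η - η'))
    (D : FlatConnection d M) (u : C) (m : M) :
    heat (D.gauge η') u (g • m) = g • heat (D.gauge η) u m := by
  simp only [heat_apply, hg.gauge_X_smul, hg.gauge_Y_smul]
  module

/-! ### Darboux transformations -/

/-- `η = q dX + j dY` is the logarithmic differential of a null eigenfunction of the Lax pair with
coefficients `(u, w)`; the Darboux transform of `(u, w)` is `(u + 2q_X, w + 3(q_XX + q_Y))`. -/
structure DarbouxSeed (b₁ b₂ : 𝕜) (u w : C) (η : closedForms d) : Prop where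
  u_eq : u = η.1.2 - d.dx η.1.1 - η.1.1 * η.1.1
  w_eq : w = -(2 * d.dx (d.dx η.1.1) + 6 * η.1.1 * d.dx η.1.1 + 2 * η.1.1 * η.1.1 * η.1.1
    + 3 * u * η.1.1 - 2 * algebraMap 𝕜 C b₁ * η.1.1 - 2 * algebraMap 𝕜 C b₂ * η.1.2)

/-- The second-order factor of `laxAdjoint`: its product with `∂_X + q` is `laxAdjoint`. -/
def laxAdjointCofactor (D : FlatConnection d M) (b₁ b₂ : 𝕜) (u q : C) : Module.End 𝕜 M :=
  -((2 : 𝕜) • D.X ^ 2) + (6 * q) • D.X - (6 * q ^ 2 + 3 * u) • 1 + (2 * b₁) • 1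
    - (2 * b₂) • (D.X - (2 * q) • 1)

/-- The second-order factor of `lax`: its product with `∂_X - q` is `lax`. -/
def laxCofactor (D : FlatConnection d M) (b₁ b₂ : 𝕜) (u q : C) : Module.End 𝕜 M :=
  (2 : 𝕜) • D.X ^ 2 + (6 * q) • D.X + (6 * d.dx q + 6 * q ^ 2 + 3 * u) • 1 - (2 * b₁) • 1
    - (2 * b₂) • (D.X + (2 * q) • 1)

lemma laxAdjointCofactor_apply (D : FlatConnection d M) (b₁ b₂ : 𝕜) (u q : C) (m : M) :
    laxAdjointCofactor D b₁ b₂ u q m = -((2 : 𝕜) • D.X (D.X m)) + (6 * q) • D.X m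
      - (6 * q ^ 2 + 3 * u) • m + (2 * b₁) • m - (2 * b₂) • (D.X m - (2 * q) • m) := rfl

lemma laxCofactor_apply (D : FlatConnection d M) (b₁ b₂ : 𝕜) (u q : C) (m : M) :
    laxCofactor D b₁ b₂ u q m = (2 : 𝕜) • D.X (D.X m) + (6 * q) • D.X m
      + (6 * d.dx q + 6 * q ^ 2 + 3 * u) • m - (2 * b₁) • m
      - (2 * b₂) • (D.X m + (2 * q) • m) := rfl

namespace DarbouxSeed
variable {b₁ b₂ : 𝕜} {u w : C} {η : closedForms d}

lemma laxAdjoint_eq_X_mul (S : DarbouxSeed b₁ b₂ u w η) (D : FlatConnection d M) :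
    laxAdjoint (D.gauge (-η)) b₁ b₂ u w = D.X * laxAdjointCofactor D b₁ b₂ u η.1.1 := by
  obtain ⟨hu, hw⟩ := S
  have closed : d.dx η.1.2 = d.dy η.1.1 := η.2
  subst hw hu
  ext m
  simp only [Module.End.mul_apply, laxAdjoint_apply, laxAdjointCofactor_apply,
    FlatConnection.gauge_X_apply, Submodule.coe_neg, Prod.fst_neg, map_add, map_sub, map_neg,
    map_smul, D.X_smul, closed, Derivation.leibniz, Derivation.leibniz_pow, derivation_map_ofNat,
    smul_eq_mul]
  match_scalars
  all_goals simp only [map_ofNat, Nat.cast_ofNat, nsmul_eq_mul] <;> ring1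

lemma laxAdjoint_transform_eq_mul_X (S : DarbouxSeed b₁ b₂ u w η) (D : FlatConnection d M) :
    laxAdjoint (D.gauge (-η)) b₁ b₂ (u + 2 * d.dx η.1.1)
      (w + 3 * (d.dx (d.dx η.1.1) + d.dy η.1.1)) = laxAdjointCofactor D b₁ b₂ u η.1.1 * D.X := by
  obtain ⟨hu, hw⟩ := S
  have closed : d.dx η.1.2 = d.dy η.1.1 := η.2
  subst hw hu
  ext m
  simp only [Module.End.mul_apply, laxAdjoint_apply, laxAdjointCofactor_apply,
    FlatConnection.gauge_X_apply, Submodule.coe_neg, Prod.fst_neg, map_add, map_sub, map_neg,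
    D.X_smul, closed, Derivation.leibniz, derivation_map_ofNat, smul_eq_mul]
  match_scalars <;> simp only [map_ofNat] <;> ring1

lemma X_mul_heatAdjoint_transform (S : DarbouxSeed b₁ b₂ u w η) (D : FlatConnection d M) :
    D.X * heatAdjoint (D.gauge (-η)) (u + 2 * d.dx η.1.1)
      = heatAdjoint (D.gauge (-η)) u * D.X := by
  obtain ⟨hu, -⟩ := S
  have closed : d.dx η.1.2 = d.dy η.1.1 := η.2
  subst hu
  ext m
  simp only [Module.End.mul_apply, heatAdjoint_apply, FlatConnection.gauge_X_apply,
    FlatConnection.gauge_Y_apply, Submodule.coe_neg, Prod.fst_neg, Prod.snd_neg, map_add, map_sub,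
    map_neg, D.X_smul, D.comm, closed, Derivation.leibniz, derivation_map_ofNat, smul_eq_mul]
  match_scalars <;> ring1

lemma X_mul_laxAdjoint_transform (S : DarbouxSeed b₁ b₂ u w η) (D : FlatConnection d M) :
    D.X * laxAdjoint (D.gauge (-η)) b₁ b₂ (u + 2 * d.dx η.1.1)
        (w + 3 * (d.dx (d.dx η.1.1) + d.dy η.1.1))
      = laxAdjoint (D.gauge (-η)) b₁ b₂ u w * D.X := by
  rw [S.laxAdjoint_transform_eq_mul_X, S.laxAdjoint_eq_X_mul, mul_assoc]

lemma lax_eq_mul_X (S : DarbouxSeed b₁ b₂ u w η) (D : FlatConnection d M) :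
    lax (D.gauge η) b₁ b₂ u w = laxCofactor D b₁ b₂ u η.1.1 * D.X := by
  obtain ⟨hu, hw⟩ := S
  subst hw hu
  ext m
  simp only [Module.End.mul_apply, lax_apply, laxCofactor_apply,
    FlatConnection.gauge_X_apply, map_add, D.X_smul]
  match_scalars <;> simp only [map_ofNat] <;> ring1

lemma lax_transform_eq_X_mul (S : DarbouxSeed b₁ b₂ u w η) (D : FlatConnection d M) :
    lax (D.gauge η) b₁ b₂ (u + 2 * d.dx η.1.1) (w + 3 * (d.dx (d.dx η.1.1) + d.dy η.1.1))
      = D.X * laxCofactor D b₁ b₂ u η.1.1 := by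
  obtain ⟨hu, hw⟩ := S
  have closed : d.dx η.1.2 = d.dy η.1.1 := η.2
  subst hw hu
  ext m
  simp only [Module.End.mul_apply, lax_apply, laxCofactor_apply, FlatConnection.gauge_X_apply,
    map_add, map_sub, map_smul, D.X_smul, closed, Derivation.leibniz, Derivation.leibniz_pow,
    derivation_map_ofNat, smul_eq_mul]
  match_scalars <;> simp only [map_ofNat] <;> ring1

lemma laxAdjoint_mul_X_cube_sub (S : DarbouxSeed b₁ b₂ u w η) (D : FlatConnection d M) :
    laxAdjoint (D.gauge (-η)) b₁ b₂ u w * ((2 : 𝕜) • D.X ^ 3)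
        - heatAdjoint (D.gauge (-η)) u * D.X * darbouxSource D b₂ η.1.1
      = -(D.X ^ 2 * linearizedKP D b₁ b₂ (u + 2 * d.dx η.1.1)) := by
  obtain ⟨hu, hw⟩ := S
  have closed : d.dx η.1.2 = d.dy η.1.1 := η.2
  subst hw hu
  ext m
  simp only [Module.End.mul_apply, LinearMap.sub_apply, LinearMap.neg_apply, LinearMap.smul_apply,
    pow_succ, pow_zero, one_mul, laxAdjoint_apply, heatAdjoint_apply, darbouxSource_apply,
    linearizedKP_apply, FlatConnection.gauge_X_apply, FlatConnection.gauge_Y_apply,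
    Submodule.coe_neg, Prod.fst_neg, Prod.snd_neg, map_add, map_sub, map_neg, map_smul, D.X_smul,
    D.Y_smul, D.comm, closed, d.comm, Derivation.leibniz, derivation_map_ofNat, smul_eq_mul,
    map_zero]
  match_scalars <;> (try simp only [map_ofNat]) <;> ring1

lemma linearizedKP_add (S : DarbouxSeed b₁ b₂ u w η) (D : FlatConnection d M) (W R : M) :
    linearizedKP D b₁ b₂ u (W + R) = linearizedKP D b₁ b₂ (u + 2 * d.dx η.1.1) W
      - (2 : 𝕜) • D.X (laxAdjoint (D.gauge (-η)) b₁ b₂ (u + 2 * d.dx η.1.1)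
          (w + 3 * (d.dx (d.dx η.1.1) + d.dy η.1.1)) R + darbouxSource D b₂ η.1.1 W)
      + ((3 : 𝕜) • D.Y - (3 : 𝕜) • D.X ^ 2 + (6 * η.1.1) • D.X - (4 * b₂) • D.X)
        (heatAdjoint (D.gauge (-η)) (u + 2 * d.dx η.1.1) R + (2 : 𝕜) • D.X (D.X W)) := by
  obtain ⟨hu, hw⟩ := S
  have closed : d.dx η.1.2 = d.dy η.1.1 := η.2
  subst hw hu
  simp only [LinearMap.add_apply, LinearMap.sub_apply, LinearMap.smul_apply, Module.End.mul_apply,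
    pow_succ, pow_zero, one_mul, laxAdjoint_apply, heatAdjoint_apply, darbouxSource_apply,
    linearizedKP_apply, FlatConnection.gauge_X_apply, FlatConnection.gauge_Y_apply,
    Submodule.coe_neg, Prod.fst_neg, Prod.snd_neg, map_add, map_sub, map_neg, map_smul, D.X_smul,
    D.Y_smul, D.comm, closed, d.comm, Derivation.leibniz, derivation_map_ofNat, smul_eq_mul,
    map_zero, Derivation.map_algebraMap]
  match_scalars <;> (try simp only [map_ofNat]) <;> ring1

lemma heat_eq (S : DarbouxSeed b₁ b₂ u w η) (D : FlatConnection d M) :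
    heat (D.gauge η) u
      = heatAdjoint (D.gauge (-η)) (u + 2 * d.dx η.1.1) - (2 : 𝕜) • D.X ^ 2 := by
  obtain ⟨hu, -⟩ := S
  subst hu
  ext m
  simp only [LinearMap.sub_apply, LinearMap.smul_apply, Module.End.mul_apply, pow_succ, pow_zero,
    one_mul, heat_apply, heatAdjoint_apply, FlatConnection.gauge_X_apply,
    FlatConnection.gauge_Y_apply, Submodule.coe_neg, Prod.fst_neg, Prod.snd_neg, map_add,
    map_neg, D.X_smul]
  match_scalars <;> (try simp only [map_ofNat]) <;> ring1

lemma lax_eq (S : DarbouxSeed b₁ b₂ u w η) (D : FlatConnection d M) :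
    lax (D.gauge η) b₁ b₂ u w
      = -(laxAdjoint (D.gauge (-η)) b₁ b₂ (u + 2 * d.dx η.1.1)
          (w + 3 * (d.dx (d.dx η.1.1) + d.dy η.1.1)) - darbouxSource D b₂ η.1.1)
        - (3 : 𝕜) • D.X
          * (heatAdjoint (D.gauge (-η)) (u + 2 * d.dx η.1.1) - (2 : 𝕜) • D.X ^ 2) := by
  obtain ⟨hu, hw⟩ := S
  have closed : d.dx η.1.2 = d.dy η.1.1 := η.2
  subst hw hu
  ext m
  simp only [LinearMap.sub_apply, LinearMap.neg_apply, LinearMap.smul_apply, Module.End.mul_apply,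
    pow_succ, pow_zero, one_mul, lax_apply, laxAdjoint_apply, heatAdjoint_apply,
    darbouxSource_apply, FlatConnection.gauge_X_apply, FlatConnection.gauge_Y_apply,
    Submodule.coe_neg, Prod.fst_neg, Prod.snd_neg, map_add, map_sub, map_neg, map_smul, D.X_smul,
    D.comm, closed, Derivation.leibniz, derivation_map_ofNat, smul_eq_mul]
  match_scalars <;> simp only [map_ofNat] <;> ring1

/-- The Lax pair commutes, so invertibility of `laxAdjoint` transfers the inhomogeneous equation for
`laxAdjoint` to the compatible one for `heatAdjoint`. -/
lemma heatAdjoint_eq_of_laxAdjoint_eq (S : DarbouxSeed b₁ b₂ u w η)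
    (hc : LaxCompatible d b₁ b₂ u w) (D : FlatConnection d M) {W s : M} {g : C}
    {η' : closedForms d} (hW : linearizedKP D b₁ b₂ (u + 2 * d.dx η.1.1) W = 0)
    (hg : HasDlog g (-η - η')) (hinj : Function.Injective (laxAdjoint (D.gauge η') b₁ b₂ u w))
    (hs : laxAdjoint (D.gauge η') b₁ b₂ u w s = -(g • D.X (darbouxSource D b₂ η.1.1 W))) :
    heatAdjoint (D.gauge η') u s = -(g • (2 : 𝕜) • D.X (D.X (D.X W))) := by
  have compat := LinearMap.congr_fun (S.laxAdjoint_mul_X_cube_sub D) W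
  have compat : laxAdjoint (D.gauge (-η)) b₁ b₂ u w ((2 : 𝕜) • D.X (D.X (D.X W)))
      = heatAdjoint (D.gauge (-η)) u (D.X (darbouxSource D b₂ η.1.1 W)) := by
    simpa [pow_succ, hW, sub_eq_zero] using compat
  have comm := LinearMap.congr_fun (hc.commute_laxAdjoint_heatAdjoint (D.gauge η')).eq s
  apply hinj
  calc laxAdjoint (D.gauge η') b₁ b₂ u w (heatAdjoint (D.gauge η') u s)
      = heatAdjoint (D.gauge η') u (laxAdjoint (D.gauge η') b₁ b₂ u w s) := comm
    _ = -(g • heatAdjoint (D.gauge (-η)) u (D.X (darbouxSource D b₂ η.1.1 W))) := by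
      rw [hs, map_neg, hg.heatAdjoint_smul]
    _ = laxAdjoint (D.gauge η') b₁ b₂ u w (-(g • (2 : 𝕜) • D.X (D.X (D.X W)))) := by
      rw [map_neg, hg.laxAdjoint_smul, compat]

end DarbouxSeed

lemma exists_smul_eq_of_isCoprime {R N : Type*} [CommRing R] [AddCommGroup N] [Module R N]
    {a b : R} (hab : IsCoprime a b) {s t : N} (h : b • s = a • t) :
    ∃ r : N, a • r = s ∧ b • r = t := by
  obtain ⟨A, B, hAB⟩ := hab
  refine ⟨A • s + B • t, ?_, ?_⟩
  · calc a • (A • s + B • t) = (A * a) • s + B • a • t := by module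
      _ = (A * a + B * b) • s := by rw [← h]; module
      _ = s := by rw [hAB, one_smul]
  · calc b • (A • s + B • t) = A • b • s + (B * b) • t := by module
      _ = (A * a + B * b) • t := by rw [h]; module
      _ = t := by rw [hAB, one_smul]

lemma eq_zero_of_smul_eq_zero_of_isCoprime {R N : Type*} [CommRing R] [AddCommGroup N] [Module R N]
    {a b : R} (hab : IsCoprime a b) {m : N} (ha : a • m = 0) (hb : b • m = 0) : m = 0 := by
  obtain ⟨A, B, hAB⟩ := hab
  rw [← one_smul R m, ← hAB, add_smul, mul_smul, mul_smul, ha, hb, smul_zero, smul_zero, add_zero]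

namespace DarbouxSeed
variable {b₁ b₂ : 𝕜} {u w : C} {η : closedForms d}

/-- The system is solvable after each of two gauge transformations, and the solutions can be glued
because the gauge factors are coprime. -/
lemma exists_adjoint_solution (S : DarbouxSeed b₁ b₂ u w η) (hc : LaxCompatible d b₁ b₂ u w)
    (D : FlatConnection d M) {σ η₁ η₂ : closedForms d} {H k₁ k₂ : C} (hH : HasDlog H (σ - η))
    (hk₁ : HasDlog k₁ (η₁ - σ)) (hk₂ : HasDlog k₂ (η₂ - σ))
    (hcop : IsCoprime (H * k₁) (H * k₂))
    (bij₁ : Function.Bijective (laxAdjoint (D.gauge (-η₁)) b₁ b₂ u w))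
    (bij₂ : Function.Bijective (laxAdjoint (D.gauge (-η₂)) b₁ b₂ u w))
    (ker : Disjoint (LinearMap.ker (laxAdjoint (D.gauge (σ - η₁ - η₂)) b₁ b₂ u w))
      (LinearMap.ker (heatAdjoint (D.gauge (σ - η₁ - η₂)) u)))
    {W : M} (hW : linearizedKP D b₁ b₂ (u + 2 * d.dx η.1.1) W = 0) :
    ∃ r, laxAdjoint (D.gauge (-η)) b₁ b₂ u w r = -D.X (darbouxSource D b₂ η.1.1 W) ∧
      heatAdjoint (D.gauge (-η)) u r = -((2 : 𝕜) • D.X (D.X (D.X W))) := by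
  have hg₁ : HasDlog (H * k₁) (-η - -η₁) := by convert hH.mul hk₁ using 1; abel
  have hg₂ : HasDlog (H * k₂) (-η - -η₂) := by convert hH.mul hk₂ using 1; abel
  have hk₂' : HasDlog k₂ (-η₁ - (σ - η₁ - η₂)) := by convert hk₂ using 1; abel
  have hk₁' : HasDlog k₁ (-η₂ - (σ - η₁ - η₂)) := by convert hk₁ using 1; abel
  obtain ⟨s₁, lax₁⟩ := bij₁.2 (-((H * k₁) • D.X (darbouxSource D b₂ η.1.1 W)))
  obtain ⟨s₂, lax₂⟩ := bij₂.2 (-((H * k₂) • D.X (darbouxSource D b₂ η.1.1 W)))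
  have heat₁ := S.heatAdjoint_eq_of_laxAdjoint_eq hc D hW hg₁ bij₁.1 lax₁
  have heat₂ := S.heatAdjoint_eq_of_laxAdjoint_eq hc D hW hg₂ bij₂.1 lax₂
  have agree : k₂ • s₁ = k₁ • s₂ := by
    refine sub_eq_zero.1 (Submodule.disjoint_def.1 ker _ ?_ ?_)
    · rw [LinearMap.mem_ker, map_sub, hk₂'.laxAdjoint_smul, hk₁'.laxAdjoint_smul, lax₁, lax₂]
      module
    · rw [LinearMap.mem_ker, map_sub, hk₂'.heatAdjoint_smul, hk₁'.heatAdjoint_smul, heat₁, heat₂]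
      module
  obtain ⟨r, hr₁, hr₂⟩ := exists_smul_eq_of_isCoprime hcop
    (show (H * k₂) • s₁ = (H * k₁) • s₂ by rw [mul_smul, agree, mul_smul])
  refine ⟨r, eq_neg_of_add_eq_zero_left ?_, eq_neg_of_add_eq_zero_left ?_⟩ <;>
    refine eq_zero_of_smul_eq_zero_of_isCoprime hcop ?_ ?_
  · rw [smul_add, ← hg₁.laxAdjoint_smul, hr₁, lax₁, neg_add_cancel]
  · rw [smul_add, ← hg₂.laxAdjoint_smul, hr₂, lax₂, neg_add_cancel]
  · rw [smul_add, ← hg₁.heatAdjoint_smul, hr₁, heat₁, neg_add_cancel]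
  · rw [smul_add, ← hg₂.heatAdjoint_smul, hr₂, heat₂, neg_add_cancel]

/-- `W ↦ W + R` is the inverse Bäcklund transformation, linearized. -/
lemma linearizedKP_add_eq_zero (S : DarbouxSeed b₁ b₂ u w η) (D : FlatConnection d M)
    (hX : Function.Injective D.X) {W R : M}
    (hW : linearizedKP D b₁ b₂ (u + 2 * d.dx η.1.1) W = 0)
    (hlax : laxAdjoint (D.gauge (-η)) b₁ b₂ u w (D.X R) = -D.X (darbouxSource D b₂ η.1.1 W))
    (hheat : heatAdjoint (D.gauge (-η)) u (D.X R) = -((2 : 𝕜) • D.X (D.X (D.X W)))) :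
    linearizedKP D b₁ b₂ u (W + R) = 0 ∧
      (W = -R → lax (D.gauge η) b₁ b₂ u w R = 0 ∧ heat (D.gauge η) u R = 0) := by
  have hlax' : laxAdjoint (D.gauge (-η)) b₁ b₂ (u + 2 * d.dx η.1.1)
      (w + 3 * (d.dx (d.dx η.1.1) + d.dy η.1.1)) R + darbouxSource D b₂ η.1.1 W = 0 := by
    have := LinearMap.congr_fun (S.X_mul_laxAdjoint_transform D) R
    apply hX
    simp_all [Module.End.mul_apply]
  have hheat' : heatAdjoint (D.gauge (-η)) (u + 2 * d.dx η.1.1) R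
      + (2 : 𝕜) • D.X (D.X W) = 0 := by
    have := LinearMap.congr_fun (S.X_mul_heatAdjoint_transform D) R
    apply hX
    simp_all [Module.End.mul_apply]
  refine ⟨by rw [S.linearizedKP_add, hW, hlax', hheat']; simp, ?_⟩
  rintro rfl
  simp only [map_neg, smul_neg, ← sub_eq_add_neg, sub_eq_zero] at hlax' hheat'
  constructor
  · simp [S.lax_eq, pow_two, hlax', hheat']
  · simp [S.heat_eq, pow_two, hheat']

lemma injective_linearizedKP (S : DarbouxSeed b₁ b₂ u w η) (hc : LaxCompatible d b₁ b₂ u w)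
    (D : FlatConnection d M) (hX : Function.Bijective D.X) {σ η₁ η₂ : closedForms d}
    {A B H h k₁ k₂ : C} (hh : HasDlog h (η - σ)) (hHh : H * h = 1) (h_eq : h = A * k₁ + B * k₂)
    (hk₁ : HasDlog k₁ (η₁ - σ)) (hk₂ : HasDlog k₂ (η₂ - σ))
    (bij₁ : Function.Bijective (laxAdjoint (D.gauge (-η₁)) b₁ b₂ u w))
    (bij₂ : Function.Bijective (laxAdjoint (D.gauge (-η₂)) b₁ b₂ u w))
    (kerAdjoint : Disjoint (LinearMap.ker (laxAdjoint (D.gauge (σ - η₁ - η₂)) b₁ b₂ u w))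
      (LinearMap.ker (heatAdjoint (D.gauge (σ - η₁ - η₂)) u)))
    (ker : Disjoint (LinearMap.ker (lax (D.gauge σ) b₁ b₂ u w))
      (LinearMap.ker (heat (D.gauge σ) u)))
    (inj : Function.Injective (linearizedKP D b₁ b₂ u)) :
    Function.Injective (linearizedKP D b₁ b₂ (u + 2 * d.dx η.1.1)) := by
  refine (injective_iff_map_eq_zero _).2 fun W hW => ?_
  have hcop : IsCoprime (H * k₁) (H * k₂) := ⟨A, B, by rw [← hHh, h_eq]; ring⟩
  have hH : HasDlog H (σ - η) := by simpa using hh.of_mul_eq_one hHh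
  obtain ⟨r, hlax, hheat⟩ := S.exists_adjoint_solution hc D hH hk₁ hk₂ hcop bij₁ bij₂ kerAdjoint hW
  obtain ⟨R, rfl⟩ := hX.2 r
  obtain ⟨hWR, hR⟩ := S.linearizedKP_add_eq_zero D hX.1 hW hlax hheat
  have W_eq : W = -R := eq_neg_of_add_eq_zero_left (inj (hWR.trans (map_zero _).symm))
  have hR0 : h • R = 0 := Submodule.disjoint_def.1 ker _
    (by rw [LinearMap.mem_ker, hh.lax_smul, (hR W_eq).1, smul_zero])
    (by rw [LinearMap.mem_ker, hh.heat_smul, (hR W_eq).2, smul_zero])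
  rw [W_eq, ← one_smul C R, ← hHh, mul_smul, hR0, smul_zero, neg_zero]

end DarbouxSeed

lemma FlatConnection.gauge_gauge_neg (D : FlatConnection d M) (η : closedForms d) :
    (D.gauge η).gauge (-η) = D := by
  rw [D.gauge_gauge, add_neg_cancel, D.gauge_zero]

lemma lax_add_algebraMap (D : FlatConnection d M) (b₁ b₂ : 𝕜) (u w : C) (ν : 𝕜) :
    lax D b₁ b₂ u (w + algebraMap 𝕜 C ν) = lax D b₁ b₂ u w + algebraMap 𝕜 (Module.End 𝕜 M) ν := by
  ext m
  simp only [lax_apply, LinearMap.add_apply, Module.algebraMap_end_apply, add_smul,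
    algebraMap_smul]
  abel

lemma laxAdjoint_add_algebraMap (D : FlatConnection d M) (b₁ b₂ : 𝕜) (u w : C) (ν : 𝕜) :
    laxAdjoint D b₁ b₂ u (w + algebraMap 𝕜 C ν)
      = laxAdjoint D b₁ b₂ u w + algebraMap 𝕜 (Module.End 𝕜 M) ν := by
  ext m
  simp only [laxAdjoint_apply, LinearMap.add_apply, Module.algebraMap_end_apply, add_smul,
    algebraMap_smul]
  abel

namespace DarbouxSeed
variable {b₁ b₂ : 𝕜} {u w : C} {η : closedForms d}

lemma laxCompatible_transform (S : DarbouxSeed b₁ b₂ u w η) (hc : LaxCompatible d b₁ b₂ u w) :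
    LaxCompatible d b₁ b₂ (u + 2 * d.dx η.1.1) (w + 3 * (d.dx (d.dx η.1.1) + d.dy η.1.1)) := by
  obtain ⟨hu, hw⟩ := S
  obtain ⟨hwx, hwy⟩ := hc
  have closed : d.dx η.1.2 = d.dy η.1.1 := η.2
  constructor
  · simp only [map_add, Derivation.leibniz, derivation_map_ofNat, smul_eq_mul, mul_zero, add_zero,
      d.comm]
    linear_combination hwx
  · have hwxx := congrArg d.dx hwx
    subst hw hu
    simp only [map_add, map_sub, map_neg, map_zero, closed, d.comm, Derivation.leibniz,
      derivation_map_ofNat, smul_eq_mul, Derivation.map_algebraMap] at hwx hwy hwxx ⊢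
    linear_combination hwy - hwxx

lemma laxCofactor_mul_heat_transform (S : DarbouxSeed b₁ b₂ u w η)
    (hc : LaxCompatible d b₁ b₂ u w) (D : FlatConnection d M) :
    laxCofactor D b₁ b₂ u η.1.1 * heat (D.gauge η) (u + 2 * d.dx η.1.1)
      = heat (D.gauge η) u * laxCofactor D b₁ b₂ u η.1.1 := by
  obtain ⟨hu, hw⟩ := S
  obtain ⟨hwx, hwy⟩ := hc
  have closed : d.dx η.1.2 = d.dy η.1.1 := η.2
  subst hw hu
  simp only [map_add, map_sub, map_neg, closed, d.comm, Derivation.leibniz, derivation_map_ofNat,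
    smul_eq_mul, Derivation.map_algebraMap] at hwx
  ext m
  simp only [Module.End.mul_apply, laxCofactor_apply, heat_apply, FlatConnection.gauge_X_apply,
    FlatConnection.gauge_Y_apply, map_add, map_sub, map_smul, D.X_smul, D.Y_smul, D.comm, d.comm,
    closed, pow_two, Derivation.leibniz, derivation_map_ofNat, smul_eq_mul, map_zero]
  match_scalars <;> simp only [map_ofNat]
  · linear_combination hwx
  all_goals ring1

end DarbouxSeed
end LaxPair

lemma isUnit_add_algebraMap_iff {R A : Type*} [CommRing R] [Ring A] [Algebra R A] {a : A} {r : R} :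
    IsUnit (a + algebraMap R A r) ↔ -r ∉ spectrum R a := by
  rw [spectrum.notMem_iff, ← IsUnit.neg_iff, map_neg, neg_add_rev, sub_eq_add_neg]

section Field
variable {𝕜 C M : Type*} [Field 𝕜] [CommRing C] [Algebra 𝕜 C] {d : DerivationPair 𝕜 C}
  [AddCommGroup M] [Module 𝕜 M] [Module C M]

/-- The analytic properties of `∂_X - α` and `∂_Y` on exponentially weighted distributions that
the Bäcklund argument uses. -/
structure Admissible (D : FlatConnection d M) (α : 𝕜) : Prop where
  spectrum_X_subset : spectrum 𝕜 D.X ⊆ {-α}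
  injective : ∀ β γ : 𝕜, Function.Injective (D.Y - β • D.X - algebraMap 𝕜 (Module.End 𝕜 M) γ)

lemma Admissible.isUnit_X_add {D : FlatConnection d M} {α r : 𝕜} (hD : Admissible D α)
    (hr : r ≠ α) : IsUnit (D.X + algebraMap 𝕜 (Module.End 𝕜 M) r) :=
  isUnit_add_algebraMap_iff.2 fun h => hr (neg_injective (hD.spectrum_X_subset h))

lemma Admissible.isUnit_X {α : 𝕜} {D : FlatConnection d M} (hD : Admissible D α) (hα : α ≠ 0) :
    IsUnit D.X := by
  simpa using hD.isUnit_X_add hα.symm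

variable [IsScalarTower 𝕜 C M]

namespace DarbouxSeed
variable {b₁ b₂ : 𝕜} {u w : C} {η : closedForms d}

lemma isUnit_laxAdjoint_transform (S : DarbouxSeed b₁ b₂ u w η) (E : FlatConnection d M) {ν : 𝕜}
    (hν : ν ≠ 0) (hE : IsUnit (laxAdjoint E b₁ b₂ u (w + algebraMap 𝕜 C ν))) :
    IsUnit (laxAdjoint E b₁ b₂ (u + 2 * d.dx η.1.1)
      (w + 3 * (d.dx (d.dx η.1.1) + d.dy η.1.1) + algebraMap 𝕜 C ν)) := by
  rw [← E.gauge_gauge_neg η] at hE ⊢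
  rw [laxAdjoint_add_algebraMap, isUnit_add_algebraMap_iff] at hE ⊢
  rw [S.laxAdjoint_eq_X_mul] at hE
  rw [S.laxAdjoint_transform_eq_mul_X]
  intro hmem
  have := spectrum.nonzero_mul_comm (𝕜 := 𝕜)
    (laxAdjointCofactor (E.gauge η) b₁ b₂ u η.1.1) (E.gauge η).X
  exact hE (this.subset ⟨hmem, neg_ne_zero.2 hν⟩).1

lemma disjoint_ker_adjoint_transform (S : DarbouxSeed b₁ b₂ u w η) (E : FlatConnection d M) {ν : 𝕜}
    (hν : ν ≠ 0)
    (ker : Disjoint (LinearMap.ker (laxAdjoint E b₁ b₂ u (w + algebraMap 𝕜 C ν)))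
      (LinearMap.ker (heatAdjoint E u))) :
    Disjoint (LinearMap.ker (laxAdjoint E b₁ b₂ (u + 2 * d.dx η.1.1)
        (w + 3 * (d.dx (d.dx η.1.1) + d.dy η.1.1) + algebraMap 𝕜 C ν)))
      (LinearMap.ker (heatAdjoint E (u + 2 * d.dx η.1.1))) := by
  rw [← E.gauge_gauge_neg η] at ker ⊢
  rw [laxAdjoint_add_algebraMap] at ker ⊢
  rw [Submodule.disjoint_def] at ker ⊢
  simp only [LinearMap.mem_ker, LinearMap.add_apply, Module.algebraMap_end_apply] at ker ⊢
  intro m hlax hheat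
  have X_m : (E.gauge η).X m = 0 := by
    refine ker _ ?_ ?_
    · rw [← Module.End.mul_apply, ← S.X_mul_laxAdjoint_transform, Module.End.mul_apply,
        ← map_smul, ← map_add, hlax, map_zero]
    · rw [← Module.End.mul_apply, ← S.X_mul_heatAdjoint_transform, Module.End.mul_apply, hheat,
        map_zero]
  rw [S.laxAdjoint_transform_eq_mul_X, Module.End.mul_apply, X_m, map_zero, zero_add] at hlax
  exact (smul_eq_zero.1 hlax).resolve_left hν

lemma disjoint_ker_transform (S : DarbouxSeed b₁ b₂ u w η) (hc : LaxCompatible d b₁ b₂ u w)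
    (E : FlatConnection d M) {ν : 𝕜} (hν : ν ≠ 0)
    (ker : Disjoint (LinearMap.ker (lax E b₁ b₂ u (w + algebraMap 𝕜 C ν)))
      (LinearMap.ker (heat E u))) :
    Disjoint (LinearMap.ker (lax E b₁ b₂ (u + 2 * d.dx η.1.1)
        (w + 3 * (d.dx (d.dx η.1.1) + d.dy η.1.1) + algebraMap 𝕜 C ν)))
      (LinearMap.ker (heat E (u + 2 * d.dx η.1.1))) := by
  have lax_eq := S.lax_eq_mul_X (E.gauge (-η))
  have lax_transform_eq := S.lax_transform_eq_X_mul (E.gauge (-η))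
  have cofactor_heat := S.laxCofactor_mul_heat_transform hc (E.gauge (-η))
  rw [E.gauge_gauge, neg_add_cancel, E.gauge_zero] at lax_eq lax_transform_eq cofactor_heat
  rw [lax_add_algebraMap] at ker ⊢
  rw [Submodule.disjoint_def] at ker ⊢
  simp only [LinearMap.mem_ker, LinearMap.add_apply, Module.algebraMap_end_apply, lax_eq,
    lax_transform_eq] at ker ⊢
  intro m hlax hheat
  have cofactor_m : laxCofactor (E.gauge (-η)) b₁ b₂ u η.1.1 m = 0 := by
    refine ker _ ?_ ?_
    · rw [Module.End.mul_apply, ← map_smul, ← map_add, ← Module.End.mul_apply, hlax, map_zero]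
    · rw [← Module.End.mul_apply, ← cofactor_heat, Module.End.mul_apply, hheat, map_zero]
  rw [Module.End.mul_apply, cofactor_m, map_zero, zero_add] at hlax
  exact (smul_eq_zero.1 hlax).resolve_left hν

end DarbouxSeed
/-! ### Line solitons -/

/-- The coefficient algebra as a module over itself, with its tautological connection. -/
def DerivationPair.connection (d : DerivationPair 𝕜 C) : FlatConnection d C where
  X := d.dx
  Y := d.dy
  comm := d.comm
  X_smul c m := by simp [mul_comm, add_comm]
  Y_smul c m := by simp [mul_comm, add_comm]

lemma connection_gauge_X_apply (η : closedForms d) (c : C) :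
    (d.connection.gauge η).X c = d.dx c + η.1.1 * c := rfl

lemma connection_gauge_Y_apply (η : closedForms d) (c : C) :
    (d.connection.gauge η).Y c = d.dy c + η.1.2 * c := rfl

lemma DarbouxSeed.of_eigenfunction {b₁ b₂ : 𝕜} {u w h H : C} {σ η : closedForms d}
    (hh : HasDlog h (η - σ)) (hHh : H * h = 1) (hheat : heat (d.connection.gauge σ) u h = 0)
    (hlax : lax (d.connection.gauge σ) b₁ b₂ u w h = 0) : DarbouxSeed b₁ b₂ u w η := by
  have h_isUnit : IsUnit h := .of_mul_eq_one_right H hHh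
  rw [← mul_one h, ← smul_eq_mul, hh.heat_smul, h_isUnit.smul_eq_zero] at hheat
  rw [← mul_one h, ← smul_eq_mul, hh.lax_smul, h_isUnit.smul_eq_zero] at hlax
  simp only [heat_apply, lax_apply, connection_gauge_X_apply, connection_gauge_Y_apply,
    smul_eq_mul, map_add, Derivation.map_one_eq_zero, Derivation.leibniz, mul_one,
    zero_add] at hheat hlax
  simp only [Algebra.smul_def, map_mul, map_ofNat] at hlax
  constructor
  · linear_combination -hheat
  · linear_combination hlax - (2 * algebraMap 𝕜 C b₂) * hheat

/-- The logarithmic differential `h⁻¹ dh` of a unit `h` with inverse `H`. -/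
def dlog (d : DerivationPair 𝕜 C) {h H : C} (hHh : H * h = 1) : closedForms d :=
  ⟨(d.dx h * H, d.dy h * H), by
    simp only [closedForms, Submodule.mem_mk, AddSubmonoid.mem_mk, AddSubsemigroup.mem_mk,
      Set.mem_ofPred_eq, Derivation.leibniz, Derivation.leibniz_of_mul_eq_one _ hHh, smul_eq_mul,
      d.comm]
    ring⟩

lemma hasDlog_dlog {h H : C} (hHh : H * h = 1) : HasDlog h (dlog d hHh) := by
  simp only [HasDlog, dlog]
  exact ⟨by linear_combination (-d.dx h) * hHh, by linear_combination (-d.dy h) * hHh⟩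

/-- The logarithmic differential `κ dX + κ² dY` of the exponential `e^{κX + κ²Y}`. -/
def expForm (d : DerivationPair 𝕜 C) (κ : 𝕜) : closedForms d :=
  ⟨(algebraMap 𝕜 C κ, algebraMap 𝕜 C (κ ^ 2)), by simp [closedForms]⟩

/-- `Q` is the logarithmic `X`-derivative of the sum of two exponentials with exponents `k`, `k'`;
the line soliton is `2Q_X`. -/
structure LineSoliton (d : DerivationPair 𝕜 C) (k k' : 𝕜) (Q : C) : Prop where
  dx_eq : d.dx Q = (algebraMap 𝕜 C k' - Q) * (Q - algebraMap 𝕜 C k)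
  dy_eq : d.dy Q = algebraMap 𝕜 C (k + k') * d.dx Q

/-- `k`, `k'`, `s` are the exponents `κ` of the exponentials annihilated by the stationary Lax pair
of the zero potential with spectral parameter `μ`. -/
structure CharRoots (k k' s b₁ b₂ μ : 𝕜) : Prop where
  b₁_eq : b₁ = -(k * k' + s * (k + k'))
  b₂_eq : b₂ = k + k' + s
  μ_eq : μ = k * k' * s

/-- The logarithmic differential of the sum of two exponentials. -/
def LineSoliton.form {k k' : 𝕜} {Q : C} (hQ : LineSoliton d k k' Q) : closedForms d :=
  ⟨(Q, algebraMap 𝕜 C (k + k') * Q - algebraMap 𝕜 C (k * k')), by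
    simp [closedForms, hQ.dy_eq, Derivation.leibniz]⟩

namespace LineSoliton
variable {k k' s b₁ b₂ μ : 𝕜} {Q : C}

lemma hasDlog_fst (hQ : LineSoliton d k k' Q) (c : 𝕜) :
    HasDlog (algebraMap 𝕜 C c * (algebraMap 𝕜 C k' - Q)) (expForm d k - hQ.form) := by
  constructor <;> simp [form, expForm, Derivation.leibniz, hQ.dy_eq, hQ.dx_eq] <;> ring

lemma hasDlog_snd (hQ : LineSoliton d k k' Q) (c : 𝕜) :
    HasDlog (algebraMap 𝕜 C c * (Q - algebraMap 𝕜 C k)) (expForm d k' - hQ.form) := by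
  constructor <;> simp [form, expForm, Derivation.leibniz, hQ.dy_eq, hQ.dx_eq] <;> ring

end LineSoliton

lemma laxCompatible_zero (d : DerivationPair 𝕜 C) (b₁ b₂ ν : 𝕜) :
    LaxCompatible d b₁ b₂ 0 (algebraMap 𝕜 C ν) := by
  constructor <;> simp

lemma LaxCompatible.add_algebraMap {b₁ b₂ : 𝕜} {u w : C} (hc : LaxCompatible d b₁ b₂ u w) (ν : 𝕜) :
    LaxCompatible d b₁ b₂ u (w + algebraMap 𝕜 C ν) := by
  constructor <;> simp [hc.dx_w, hc.dy_w]

lemma heat_zero_one (d : DerivationPair 𝕜 C) (κ : 𝕜) :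
    heat (d.connection.gauge (expForm d κ)) 0 1 = 0 := by
  simp only [heat_apply, connection_gauge_X_apply, connection_gauge_Y_apply, expForm,
    Derivation.map_one_eq_zero, Derivation.map_algebraMap, map_zero, map_add, map_pow,
    smul_eq_mul, mul_one]
  ring

lemma lax_zero_one (d : DerivationPair 𝕜 C) {b₁ b₂ μ κ : 𝕜}
    (hκ : κ ^ 3 - b₂ * κ ^ 2 - b₁ * κ = μ) :
    lax (d.connection.gauge (expForm d κ)) b₁ b₂ 0 (algebraMap 𝕜 C (-(2 * μ))) 1 = 0 := by
  simp only [lax_apply, connection_gauge_X_apply, expForm, Derivation.map_one_eq_zero,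
    Derivation.map_algebraMap, ← hκ, smul_eq_mul, mul_one, zero_add, mul_zero, zero_mul,
    Derivation.leibniz]
  simp only [Algebra.smul_def, map_mul, map_ofNat, map_neg, map_sub, map_pow]
  ring

lemma LineSoliton.heat_sub {k k' : 𝕜} {Q : C} (hQ : LineSoliton d k k' Q) (κ : 𝕜) :
    heat (d.connection.gauge (expForm d κ)) (2 * d.dx Q) (Q - algebraMap 𝕜 C κ) = 0 := by
  simp only [heat_apply, connection_gauge_X_apply, connection_gauge_Y_apply, expForm, hQ.dy_eq,
    hQ.dx_eq, Derivation.map_algebraMap, Derivation.leibniz, map_zero, map_add, map_sub, map_pow,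
    smul_eq_mul]
  ring

lemma LineSoliton.lax_sub {k k' s κ b₁ b₂ μ μ' : 𝕜} {Q : C} (hQ : LineSoliton d k k' Q)
    (hr : CharRoots k k' s b₁ b₂ μ) (hκ : κ ^ 3 - b₂ * κ ^ 2 - b₁ * κ = μ') :
    lax (d.connection.gauge (expForm d κ)) b₁ b₂ (2 * d.dx Q)
      (algebraMap 𝕜 C (-(2 * μ')) + 3 * (d.dx (d.dx Q) + d.dy Q)) (Q - algebraMap 𝕜 C κ) = 0 := by
  obtain ⟨rfl, rfl, -⟩ := hr
  subst hκ
  simp only [lax_apply, connection_gauge_X_apply, expForm, hQ.dy_eq, hQ.dx_eq,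
    Derivation.map_algebraMap, Derivation.leibniz, map_add, map_sub, map_neg, map_zero, smul_eq_mul,
    mul_zero, zero_sub, sub_zero, add_zero]
  simp only [Algebra.smul_def, map_mul, map_ofNat, map_neg, map_sub, map_add, map_pow]
  ring

lemma LineSoliton.injective_linearizedKP {l l' c b₁ b₂ : 𝕜} {q u w A B h H : C}
    (hq : LineSoliton d l l' q) (hHh : H * h = 1)
    (h_eq : h = A * (algebraMap 𝕜 C c * (algebraMap 𝕜 C l' - q))
      + B * (algebraMap 𝕜 C c * (q - algebraMap 𝕜 C l)))
    (hc : LaxCompatible d b₁ b₂ u w)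
    (heatA : heat (d.connection.gauge (expForm d l)) u A = 0)
    (laxA : lax (d.connection.gauge (expForm d l)) b₁ b₂ u w A = 0)
    (heatB : heat (d.connection.gauge (expForm d l')) u B = 0)
    (laxB : lax (d.connection.gauge (expForm d l')) b₁ b₂ u w B = 0)
    (D : FlatConnection d M) (hX : IsUnit D.X)
    (unit₁ : IsUnit (laxAdjoint (D.gauge (-expForm d l)) b₁ b₂ u w))
    (unit₂ : IsUnit (laxAdjoint (D.gauge (-expForm d l')) b₁ b₂ u w))
    (kerAdjoint : Disjoint
      (LinearMap.ker (laxAdjoint (D.gauge (hq.form - expForm d l - expForm d l')) b₁ b₂ u w))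
      (LinearMap.ker (heatAdjoint (D.gauge (hq.form - expForm d l - expForm d l')) u)))
    (ker : Disjoint (LinearMap.ker (lax (D.gauge hq.form) b₁ b₂ u w))
      (LinearMap.ker (heat (D.gauge hq.form) u)))
    (inj : Function.Injective (linearizedKP D b₁ b₂ u)) :
    Function.Injective (linearizedKP D b₁ b₂ (u + 2 * d.dx (q + d.dx h * H))) := by
  rw [Module.End.isUnit_iff] at hX unit₁ unit₂
  have hk₁ := hq.hasDlog_fst c
  have hk₂ := hq.hasDlog_snd c
  have hh : HasDlog h (hq.form + dlog d hHh - hq.form) := by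
    simpa only [add_sub_cancel_left] using hasDlog_dlog hHh
  have h_smul : h = (algebraMap 𝕜 C c * (algebraMap 𝕜 C l' - q)) • A
      + (algebraMap 𝕜 C c * (q - algebraMap 𝕜 C l)) • B := by
    rw [h_eq, smul_eq_mul, smul_eq_mul, mul_comm A, mul_comm B]
  have S : DarbouxSeed b₁ b₂ u w (hq.form + dlog d hHh) := by
    refine .of_eigenfunction hh hHh ?_ ?_
    · rw [h_smul, map_add, hk₁.heat_smul, hk₂.heat_smul, heatA, heatB]
      simp
    · rw [h_smul, map_add, hk₁.lax_smul, hk₂.lax_smul, laxA, laxB]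
      simp
  exact S.injective_linearizedKP hc D hX hh hHh h_eq hk₁ hk₂ unit₁ unit₂ kerAdjoint ker inj

/-! ### The vacuum Lax pair -/

/-- No difference between one of the exponents `k`, `k'`, `s` and one of the exponents `k`, `k'`
equals the weight `α`. -/
def Nonresonant (k k' s α : 𝕜) : Prop :=
  ∀ x ∈ ({k, k', s} : Set 𝕜), ∀ y ∈ ({k, k'} : Set 𝕜), x - y ≠ α

lemma CharRoots.laxAdjoint_eq {k k' s b₁ b₂ μ : 𝕜} (hr : CharRoots k k' s b₁ b₂ μ) (κ : 𝕜)
    (D : FlatConnection d M) :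
    laxAdjoint (D.gauge (-expForm d κ)) b₁ b₂ 0 (algebraMap 𝕜 C (-(2 * μ)))
      = algebraMap 𝕜 (Module.End 𝕜 M) (-2) * ((D.X + algebraMap 𝕜 (Module.End 𝕜 M) (k - κ))
        * (D.X + algebraMap 𝕜 (Module.End 𝕜 M) (k' - κ))
        * (D.X + algebraMap 𝕜 (Module.End 𝕜 M) (s - κ))) := by
  obtain ⟨rfl, rfl, rfl⟩ := hr
  ext m
  simp only [laxAdjoint_apply, FlatConnection.gauge_X_apply, expForm, Submodule.coe_neg,
    Prod.fst_neg, neg_smul, algebraMap_smul, zero_smul, map_zero, map_add, map_neg, map_smul,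
    LinearMap.neg_apply, Module.End.mul_apply, LinearMap.add_apply, Module.algebraMap_end_apply]
  module

lemma Admissible.isUnit_laxAdjoint [NeZero (2 : 𝕜)] {k k' s b₁ b₂ μ α κ : 𝕜}
    {D : FlatConnection d M} (hD : Admissible D α) (hr : CharRoots k k' s b₁ b₂ μ)
    (hα : Nonresonant k k' s α) (hκ : κ ∈ ({k, k'} : Set 𝕜)) :
    IsUnit (laxAdjoint (D.gauge (-expForm d κ)) b₁ b₂ 0 (algebraMap 𝕜 C (-(2 * μ)))) := by
  rw [hr.laxAdjoint_eq]
  have isUnit_two : IsUnit (algebraMap 𝕜 (Module.End 𝕜 M) (-2)) :=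
    (IsUnit.mk0 (-2 : 𝕜) (neg_ne_zero.2 two_ne_zero)).map _
  exact isUnit_two.mul (((hD.isUnit_X_add (hα k (by simp) κ hκ)).mul
    (hD.isUnit_X_add (hα k' (by simp) κ hκ))).mul (hD.isUnit_X_add (hα s (by simp) κ hκ)))

lemma eq_zero_of_apply_eq_of_commute {X T : Module.End 𝕜 M} (hTX : Commute T X) {k k' s : 𝕜}
    (hT : Function.Injective T)
    (hTs : Function.Injective (T - algebraMap 𝕜 (Module.End 𝕜 M) ((s - k) * (s - k')))) {m : M}
    (hm : T m = X (X m) - (k + k') • X m + (k * k') • m)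
    (hlax : X (X (X m)) - (k + k' + s) • X (X m) + (k * k' + s * (k + k')) • X m
      - (k * k' * s) • m = 0) : m = 0 := by
  have comm (x : M) : T (X x) = X (T x) := LinearMap.congr_fun hTX x
  have factor : T ((T - algebraMap 𝕜 (Module.End 𝕜 M) ((s - k) * (s - k'))) m) = 0 := by
    simp only [LinearMap.sub_apply, Module.algebraMap_end_apply, hm, map_sub, map_add, map_smul,
      comm]
    have hXlax := congrArg X hlax
    simp only [map_sub, map_add, map_smul, map_zero] at hXlax
    linear_combination (norm := module) hXlax + (s - k - k') • hlax
  exact hTs ((hT (factor.trans (map_zero T).symm)).trans (map_zero _).symm)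

lemma Admissible.disjoint_ker [NeZero (2 : 𝕜)] {k k' s b₁ b₂ μ α : 𝕜} {Q : C}
    {D : FlatConnection d M} (hD : Admissible D α) (hr : CharRoots k k' s b₁ b₂ μ)
    (hQ : LineSoliton d k k' Q) :
    Disjoint (LinearMap.ker (lax (D.gauge hQ.form) b₁ b₂ 0 (algebraMap 𝕜 C (-(2 * μ)))))
      (LinearMap.ker (heat (D.gauge hQ.form) 0)) := by
  obtain ⟨rfl, rfl, rfl⟩ := hr
  let E := D.gauge hQ.form
  have T_apply (m : M) :
      (D.Y - (k + k') • D.X) m = E.Y m - (k + k') • E.X m + (k * k') • m := by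
    simp only [E, LinearMap.sub_apply, LinearMap.smul_apply, FlatConnection.gauge_X_apply,
      FlatConnection.gauge_Y_apply, LineSoliton.form, sub_smul, mul_smul, algebraMap_smul]
    module
  refine Submodule.disjoint_def.2 fun m hlax hheat => ?_
  replace hheat : E.Y m = E.X (E.X m) := by
    simpa [heat_apply, sub_eq_zero] using hheat
  refine eq_zero_of_apply_eq_of_commute (X := E.X) (k := k) (k' := k') (s := s)
    (T := D.Y - (k + k') • D.X) ?_
    (by simpa using hD.injective (k + k') 0) (hD.injective _ _) ?_ ?_
  · ext x
    simp only [Module.End.mul_apply, T_apply, map_add, map_sub, map_smul, E.comm]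
  · rw [T_apply, hheat]
  · rw [LinearMap.mem_ker, lax_apply] at hlax
    refine (smul_eq_zero.1 ?_).resolve_left (two_ne_zero (α := 𝕜))
    rw [← hlax]
    simp only [algebraMap_smul, E]
    module

lemma Admissible.disjoint_ker_adjoint [NeZero (2 : 𝕜)] {k k' s b₁ b₂ μ α : 𝕜} {Q : C}
    {D : FlatConnection d M} (hD : Admissible D α) (hr : CharRoots k k' s b₁ b₂ μ)
    (hQ : LineSoliton d k k' Q) :
    Disjoint
      (LinearMap.ker (laxAdjoint (D.gauge (hQ.form - expForm d k - expForm d k')) b₁ b₂ 0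
        (algebraMap 𝕜 C (-(2 * μ)))))
      (LinearMap.ker (heatAdjoint (D.gauge (hQ.form - expForm d k - expForm d k')) 0)) := by
  obtain ⟨rfl, rfl, rfl⟩ := hr
  let E := D.gauge (hQ.form - expForm d k - expForm d k')
  have T_apply (m : M) :
      (D.Y - (k + k') • D.X) m = E.Y m - (k + k') • E.X m - (k * k') • m := by
    simp only [E, LinearMap.sub_apply, LinearMap.smul_apply, FlatConnection.gauge_X_apply,
      FlatConnection.gauge_Y_apply, LineSoliton.form, expForm, Submodule.coe_sub, Prod.fst_sub,
      Prod.snd_sub, sub_smul, mul_smul, algebraMap_smul]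
    module
  refine Submodule.disjoint_def.2 fun m hlax hheat => ?_
  replace hheat : E.Y m = -E.X (E.X m) := by
    simpa [heatAdjoint_apply, eq_neg_iff_add_eq_zero] using hheat
  refine eq_zero_of_apply_eq_of_commute (X := -E.X) (k := k) (k' := k') (s := s)
    (T := -(D.Y - (k + k') • D.X)) ?_ ?_ ?_ ?_ ?_
  · refine Commute.neg_left (Commute.neg_right (LinearMap.ext fun x => ?_))
    simp only [Module.End.mul_apply, T_apply, map_sub, map_smul, E.comm]
  · convert neg_injective.comp (hD.injective (k + k') 0) using 1
    ext x
    simp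
  · convert neg_injective.comp (hD.injective (k + k') (-((s - k) * (s - k')))) using 1
    ext x
    simp only [neg_sub, map_mul, map_sub, LinearMap.sub_apply, LinearMap.smul_apply,
      Module.End.mul_apply, Module.algebraMap_end_apply, map_neg, sub_neg_eq_add,
      Function.comp_apply, LinearMap.add_apply, neg_add_rev]
    abel
  · simp only [LinearMap.neg_apply, T_apply, hheat, map_neg]
    module
  · rw [LinearMap.mem_ker, laxAdjoint_apply] at hlax
    refine (smul_eq_zero.1 ?_).resolve_left (two_ne_zero (α := 𝕜))
    rw [← hlax]
    simp only [E, LinearMap.neg_apply, map_neg, zero_smul, map_zero]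
    module

lemma LineSoliton.darbouxSeed {k k' s b₁ b₂ μ : 𝕜} {Q : C} (hQ : LineSoliton d k k' Q)
    (hr : CharRoots k k' s b₁ b₂ μ) :
    DarbouxSeed b₁ b₂ 0 (algebraMap 𝕜 C (-(2 * μ))) hQ.form := by
  obtain ⟨rfl, rfl, rfl⟩ := hr
  constructor
  · simp only [form, hQ.dx_eq, map_add, map_mul]
    ring
  · simp only [form, hQ.dx_eq, Derivation.leibniz, Derivation.map_algebraMap, map_sub, map_neg,
      map_add, map_mul, map_ofNat, smul_eq_mul]
    ring

lemma CharRoots.cubic_eq {k k' s b₁ b₂ μ κ : 𝕜} (hr : CharRoots k k' s b₁ b₂ μ)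
    (hκ : κ ∈ ({k, k'} : Set 𝕜)) : κ ^ 3 - b₂ * κ ^ 2 - b₁ * κ = μ := by
  obtain ⟨rfl, rfl, rfl⟩ := hr
  obtain rfl | rfl := hκ <;> ring

section TwoSolitons
variable [NeZero (2 : 𝕜)] {α κ₁ κ₂ κ₃ κ₄ s s' b₁ b₂ μ₁ μ₂ : 𝕜} {Q q h H : C}
  {D : FlatConnection d M}

lemma Admissible.injective_linearizedKP_lineSoliton (hD : Admissible D α)
    (hQ : LineSoliton d κ₂ κ₃ Q) (hr : CharRoots κ₂ κ₃ s b₁ b₂ μ₂) (hκ : κ₂ ≠ κ₃)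
    (hα : Nonresonant κ₂ κ₃ s α) (inj : Function.Injective (linearizedKP D b₁ b₂ 0)) :
    Function.Injective (linearizedKP D b₁ b₂ (2 * d.dx Q)) := by
  have h_eq : (1 : C) = 1 * (algebraMap 𝕜 C (κ₃ - κ₂)⁻¹ * (algebraMap 𝕜 C κ₃ - Q))
      + 1 * (algebraMap 𝕜 C (κ₃ - κ₂)⁻¹ * (Q - algebraMap 𝕜 C κ₂)) := by
    rw [one_mul, one_mul, ← mul_add, sub_add_sub_cancel, ← map_sub, ← map_mul,
      inv_mul_cancel₀ (sub_ne_zero.2 hκ.symm), map_one]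
  have α_ne : α ≠ 0 := by simpa using (hα κ₂ (by simp) κ₂ (by simp)).symm
  have := hQ.injective_linearizedKP (mul_one (1 : C)) h_eq (laxCompatible_zero d b₁ b₂ (-(2 * μ₂)))
    (heat_zero_one d κ₂) (lax_zero_one d (hr.cubic_eq (κ := κ₂) (by simp))) (heat_zero_one d κ₃)
    (lax_zero_one d (hr.cubic_eq (κ := κ₃) (by simp))) D (hD.isUnit_X α_ne)
    (hD.isUnit_laxAdjoint hr hα (by simp)) (hD.isUnit_laxAdjoint hr hα (by simp))
    (hD.disjoint_ker_adjoint hr hQ) (hD.disjoint_ker hr hQ) inj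
  simpa using this

lemma Admissible.injective_linearizedKP_twoSoliton (hD : Admissible D α)
    (hQ : LineSoliton d κ₂ κ₃ Q) (hq : LineSoliton d κ₁ κ₄ q) (hHh : H * h = 1) {c : 𝕜}
    (h_eq : h = (Q - algebraMap 𝕜 C κ₁) * (algebraMap 𝕜 C c * (algebraMap 𝕜 C κ₄ - q))
      + (algebraMap 𝕜 C κ₄ - Q) * (algebraMap 𝕜 C c * (q - algebraMap 𝕜 C κ₁)))
    (hr : CharRoots κ₂ κ₃ s b₁ b₂ μ₂) (hr' : CharRoots κ₁ κ₄ s' b₁ b₂ μ₁) (hμ : μ₁ ≠ μ₂)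
    (hα : Nonresonant κ₁ κ₄ s' α)
    (inj : Function.Injective (linearizedKP D b₁ b₂ (2 * d.dx Q))) :
    Function.Injective (linearizedKP D b₁ b₂ (2 * d.dx Q + 2 * d.dx (q + d.dx h * H))) := by
  have ν_ne : 2 * (μ₂ - μ₁) ≠ 0 := mul_ne_zero two_ne_zero (sub_ne_zero.2 hμ.symm)
  have α_ne : α ≠ 0 := by simpa using (hα κ₁ (by simp) κ₁ (by simp)).symm
  have S := hQ.darbouxSeed hr
  have w₀_eq : algebraMap 𝕜 C (-(2 * μ₂)) + algebraMap 𝕜 C (2 * (μ₂ - μ₁))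
      = algebraMap 𝕜 C (-(2 * μ₁)) := by
    rw [← map_add]; ring_nf
  have u_eq : 0 + 2 * d.dx hQ.form.1.1 = 2 * d.dx Q := zero_add _
  have w_eq : algebraMap 𝕜 C (-(2 * μ₂)) + 3 * (d.dx (d.dx hQ.form.1.1) + d.dy hQ.form.1.1)
      + algebraMap 𝕜 C (2 * (μ₂ - μ₁))
      = algebraMap 𝕜 C (-(2 * μ₁)) + 3 * (d.dx (d.dx Q) + d.dy Q) := by
    rw [add_right_comm, w₀_eq]; rfl
  have hc := (S.laxCompatible_transform (laxCompatible_zero ..)).add_algebraMap (2 * (μ₂ - μ₁))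
  have isUnit_laxAdjoint {κ : 𝕜} (hκ : κ ∈ ({κ₁, κ₄} : Set 𝕜)) :=
    S.isUnit_laxAdjoint_transform (D.gauge (-expForm d κ)) ν_ne
      (w₀_eq ▸ hD.isUnit_laxAdjoint hr' hα hκ)
  have kerAdjoint := S.disjoint_ker_adjoint_transform _ ν_ne
    (w₀_eq ▸ hD.disjoint_ker_adjoint hr' hq)
  have ker := S.disjoint_ker_transform (laxCompatible_zero ..) _ ν_ne
    (w₀_eq ▸ hD.disjoint_ker hr' hq)
  rw [u_eq, w_eq] at hc kerAdjoint ker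
  simp only [u_eq, w_eq] at isUnit_laxAdjoint
  have heatB := hQ.heat_sub κ₄
  have laxB := hQ.lax_sub hr (hr'.cubic_eq (κ := κ₄) (by simp))
  rw [← neg_sub, map_neg, neg_eq_zero] at heatB laxB
  exact hq.injective_linearizedKP hHh h_eq hc (hQ.heat_sub κ₁)
    (hQ.lax_sub hr (hr'.cubic_eq (κ := κ₁) (by simp))) heatB laxB D (hD.isUnit_X α_ne)
    (isUnit_laxAdjoint (by simp)) (isUnit_laxAdjoint (by simp)) kerAdjoint ker inj

end TwoSolitons

end Field

/-! ### Smooth coefficients with bounded derivatives -/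

section Coefficients
variable {E F G : Type*} [NormedAddCommGroup E] [NormedSpace ℝ E] [NormedAddCommGroup F]
  [NormedSpace ℝ F] [NormedAddCommGroup G] [NormedSpace ℝ G]

/-- The class `C_b^n` of functions with bounded derivatives up to order `n`. -/
def BddContDiff (n : ℕ) (f : E → F) : Prop :=
  ContDiff ℝ n f ∧ ∀ m ≤ n, ∃ K, ∀ x, ‖iteratedFDeriv ℝ m f x‖ ≤ K

namespace BddContDiff
variable {n : ℕ} {f g : E → F}

lemma bounded (hf : BddContDiff n f) : ∃ K, ∀ x, ‖f x‖ ≤ K := by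
  simpa using hf.2 0 n.zero_le

lemma zero_iff : BddContDiff 0 f ↔ Continuous f ∧ ∃ K, ∀ x, ‖f x‖ ≤ K := by
  simp [BddContDiff, contDiff_zero]

lemma succ_iff : BddContDiff (n + 1) f ↔
    Differentiable ℝ f ∧ (∃ K, ∀ x, ‖f x‖ ≤ K) ∧ BddContDiff n (fderiv ℝ f) := by
  refine ⟨fun hf => ?_, fun ⟨hd, hb, hf⟩ => ⟨?_, fun m hm => ?_⟩⟩
  · refine ⟨hf.1.differentiable (by simp), hf.bounded, ?_, fun m hm => ?_⟩
    · exact (contDiff_succ_iff_fderiv.1 (by exact_mod_cast hf.1)).2.2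
    · simpa only [norm_iteratedFDeriv_fderiv] using hf.2 (m + 1) (by lia)
  · exact_mod_cast contDiff_succ_iff_fderiv.2 ⟨hd, by simp, hf.1⟩
  · cases m with
    | zero => simpa using hb
    | succ m => simpa only [norm_iteratedFDeriv_fderiv] using hf.2 m (by lia)

lemma const (n : ℕ) (c : F) : BddContDiff n fun _ : E => c := by
  refine ⟨contDiff_const, fun m _ => ?_⟩
  cases m with
  | zero => exact ⟨‖c‖, by simp⟩
  | succ m => exact ⟨0, by simp [iteratedFDeriv_const_of_ne]⟩

lemma add (hf : BddContDiff n f) (hg : BddContDiff n g) : BddContDiff n (f + g) := by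
  refine ⟨hf.1.add hg.1, fun m hm => ?_⟩
  obtain ⟨K, hK⟩ := hf.2 m hm
  obtain ⟨L, hL⟩ := hg.2 m hm
  have hmn : (m : WithTop ℕ∞) ≤ n := by exact_mod_cast hm
  refine ⟨K + L, fun x => ?_⟩
  rw [iteratedFDeriv_add (hf.1.of_le hmn) (hg.1.of_le hmn)]
  exact norm_add_le_of_le (hK x) (hL x)

lemma bilinear {H : Type*} [NormedAddCommGroup H] [NormedSpace ℝ H] (B : F →L[ℝ] G →L[ℝ] H)
    {g : E → G} (hf : BddContDiff n f) (hg : BddContDiff n g) :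
    BddContDiff n fun x => B (f x) (g x) := by
  refine ⟨(B.contDiff.comp hf.1).clm_apply hg.1, fun m hm => ?_⟩
  choose! K hK using hf.2
  choose! L hL using hg.2
  refine ⟨‖B‖ * ∑ i ∈ Finset.range (m + 1), (m.choose i) * K i * L (m - i), fun x => ?_⟩
  refine (B.norm_iteratedFDeriv_le_of_bilinear hf.1 hg.1 x (by exact_mod_cast hm)).trans ?_
  gcongr with i hi
  · exact mul_nonneg (Nat.cast_nonneg _) ((norm_nonneg _).trans
      (hK i (by simp only [Finset.mem_range] at hi; lia) x))
  · exact hK i (by simp only [Finset.mem_range] at hi; lia) x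
  · exact hL (m - i) (by lia) x

lemma comp_clm (hf : BddContDiff n f) (A : G →L[ℝ] E) : BddContDiff n fun x => f (A x) := by
  refine ⟨hf.1.comp A.contDiff, fun m hm => ?_⟩
  obtain ⟨K, hK⟩ := hf.2 m hm
  refine ⟨K * ∏ _ : Fin m, ‖A‖, fun x => ?_⟩
  have h := A.iteratedFDeriv_comp_right hf.1 x (i := m) (by exact_mod_cast hm)
  rw [show (fun x => f (A x)) = f ∘ A from rfl, h]
  exact (ContinuousMultilinearMap.norm_compContinuousLinearMap_le _ _).trans
    (mul_le_mul_of_nonneg_right (hK _) (by positivity))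

end BddContDiff

variable (E) in
/-- The algebra of real functions all of whose derivatives are bounded. -/
def bddSmooth : Subalgebra ℝ (E → ℝ) where
  carrier := {f | ∀ n, BddContDiff n f}
  mul_mem' hf hg n := (hf n).bilinear (ContinuousLinearMap.mul ℝ ℝ) (hg n)
  add_mem' hf hg n := (hf n).add (hg n)
  algebraMap_mem' c n := .const n c

lemma mem_bddSmooth_of_hasCompactSupport {f : E → ℝ} (hf : ContDiff ℝ (⊤ : ℕ∞) f)
    (hs : HasCompactSupport f) : f ∈ bddSmooth E := fun n =>
  ⟨hf.of_le (by exact_mod_cast le_top), fun m _ =>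
    (hf.continuous_iteratedFDeriv (by exact_mod_cast le_top)).bounded_above_of_compact_support
      (hs.iteratedFDeriv m)⟩

lemma mem_bddSmooth_of_fderiv {f : E → ℝ} {f' : E → E →L[ℝ] ℝ} (hf : ∀ x, HasFDerivAt f (f' x) x)
    (hb : ∃ K, ∀ x, ‖f x‖ ≤ K) (hf' : ∀ n, BddContDiff n f → BddContDiff n f') :
    f ∈ bddSmooth E := by
  intro n
  have hd : Differentiable ℝ f := fun x => (hf x).differentiableAt
  induction n with
  | zero => exact BddContDiff.zero_iff.2 ⟨hd.continuous, hb⟩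
  | succ n ih => exact BddContDiff.succ_iff.2 ⟨hd, hb, (funext fun x => (hf x).fderiv) ▸ hf' n ih⟩

namespace bddSmooth

lemma contDiff (f : bddSmooth E) : ContDiff ℝ (⊤ : ℕ∞) f.1 :=
  contDiff_infty.2 fun n => (f.2 n).1

lemma differentiable (f : bddSmooth E) : Differentiable ℝ f.1 :=
  (contDiff f).differentiable (by simp)

lemma bounded (f : bddSmooth E) : ∃ K, ∀ x, ‖f.1 x‖ ≤ K := (f.2 0).bounded

lemma hasTemperateGrowth (f : bddSmooth E) : (fun x => (f.1 x : ℂ)).HasTemperateGrowth := by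
  suffices h : f.1.HasTemperateGrowth from Complex.ofRealCLM.hasTemperateGrowth.comp h
  refine ⟨contDiff f, fun n => ?_⟩
  obtain ⟨K, hK⟩ := (f.2 n).2 n le_rfl
  exact ⟨0, K, by simpa using hK⟩

lemma inv_mem {f : E → ℝ} (hf : f ∈ bddSmooth E) {c : ℝ} (hc : 0 < c) (h : ∀ x, c ≤ f x) :
    (fun x => (f x)⁻¹) ∈ bddSmooth E := by
  refine mem_bddSmooth_of_fderiv (f' := fun x => (-((f x)⁻¹ * (f x)⁻¹)) • fderiv ℝ f x)
    (fun x => ?_) ⟨c⁻¹, fun x => ?_⟩ fun n hn => ?_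
  · refine ((hasDerivAt_inv (hc.trans_le (h x)).ne').comp_hasFDerivAt x
      (differentiable ⟨f, hf⟩ x).hasFDerivAt).congr_fderiv ?_
    rw [sq, mul_inv]
  · rw [Real.norm_of_nonneg (inv_nonneg.2 (hc.le.trans (h x)))]
    exact inv_anti₀ hc (h x)
  · have hneg := (BddContDiff.const n (-1 : ℝ)).bilinear (ContinuousLinearMap.mul ℝ ℝ)
      (hn.bilinear (ContinuousLinearMap.mul ℝ ℝ) hn)
    simp only [ContinuousLinearMap.mul_apply', neg_one_mul] at hneg
    exact hneg.bilinear (ContinuousLinearMap.lsmul ℝ ℝ) (BddContDiff.succ_iff.1 (hf (n + 1))).2.2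

/-- The derivative `∂_v` of coefficients. -/
noncomputable def lineDeriv (v : E) : Derivation ℝ (bddSmooth E) (bddSmooth E) :=
  Derivation.mk'
    { toFun f := ⟨fun x => fderiv ℝ f.1 x v, fun n =>
        (BddContDiff.succ_iff.1 (f.2 (n + 1))).2.2.bilinear
          (ContinuousLinearMap.id ℝ (E →L[ℝ] ℝ)) (.const n v)⟩
      map_add' f g := by
        ext x
        exact congr($(fderiv_add (differentiable f x) (differentiable g x)) v)
      map_smul' c f := by
        ext x
        exact congr($(fderiv_const_smul (differentiable f x) c) v) }
    fun f g => by
      ext x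
      exact congr($(fderiv_mul (differentiable f x) (differentiable g x)) v)

lemma lineDeriv_apply (v : E) (f : bddSmooth E) (x : E) :
    (lineDeriv v f).1 x = fderiv ℝ f.1 x v := rfl

lemma lineDeriv_comm (v w : E) (f : bddSmooth E) :
    lineDeriv v (lineDeriv w f) = lineDeriv w (lineDeriv v f) := by
  ext x
  have hd : DifferentiableAt ℝ (fderiv ℝ f.1) x :=
    ((contDiff f).fderiv_right (m := 1) (by norm_cast)).differentiable (by simp) x
  have h : ∀ v w, (lineDeriv v (lineDeriv w f)).1 x = fderiv ℝ (fderiv ℝ f.1) x v w :=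
    fun v w => congr($((hd.hasFDerivAt.clm_apply (hasFDerivAt_const w x)).fderiv) v).trans
      (by simp)
  rw [h, h, ((contDiff f).contDiffAt.isSymmSndFDerivAt
    (minSmoothness_of_isRCLikeNormedField.trans_le ENat.LEInfty.out)).eq]

/-- The pair `(∂_v, ∂_w)`. -/
noncomputable def derivationPair (v w : E) : DerivationPair ℝ (bddSmooth E) where
  dx := lineDeriv v
  dy := lineDeriv w
  comm := lineDeriv_comm v w

/-- The dilation `x ↦ f (ε x)`. -/
def dilate (ε : ℝ) (f : bddSmooth E) : bddSmooth E :=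
  ⟨fun x => f.1 (ε • x), fun n => (f.2 n).comp_clm (ε • ContinuousLinearMap.id ℝ E)⟩

lemma lineDeriv_dilate (ε : ℝ) (f : bddSmooth E) (v : E) :
    lineDeriv v (dilate ε f) = ε • dilate ε (lineDeriv v f) := by
  ext x
  exact congr($(fderiv_comp_smul (f := f.1) ε) v)

end bddSmooth
end Coefficients

section MulSchwartz
open scoped SchwartzMap LineDeriv
variable {E : Type*} [NormedAddCommGroup E] [NormedSpace ℝ E]

lemma smulLeftCLM_coe_apply (g : bddSmooth E) (φ : 𝓢(E, ℂ)) (x : E) :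
    SchwartzMap.smulLeftCLM ℂ (fun x => (g.1 x : ℂ)) φ x = g.1 x * φ x :=
  SchwartzMap.smulLeftCLM_apply_apply (bddSmooth.hasTemperateGrowth g) φ x

/-- The action of the coefficients on test functions by multiplication. -/
noncomputable def mulSchwartz : bddSmooth E →+* (𝓢(E, ℂ) →L[ℂ] 𝓢(E, ℂ)) where
  toFun g := SchwartzMap.smulLeftCLM ℂ fun x => (g.1 x : ℂ)
  map_one' := by ext φ x; simp
  map_zero' := by ext φ x; simp
  map_add' g h := by
    ext φ x
    exact (smulLeftCLM_coe_apply (g + h) φ x).trans (by simp [smulLeftCLM_coe_apply, add_mul])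
  map_mul' g h := by
    ext φ x
    exact (smulLeftCLM_coe_apply (g * h) φ x).trans (by simp [smulLeftCLM_coe_apply, mul_assoc])

lemma mulSchwartz_apply (g : bddSmooth E) (φ : 𝓢(E, ℂ)) (x : E) :
    mulSchwartz g φ x = g.1 x * φ x :=
  smulLeftCLM_coe_apply g φ x

lemma mulSchwartz_smul (c : ℝ) (g : bddSmooth E) (φ : 𝓢(E, ℂ)) :
    mulSchwartz (c • g) φ = c • mulSchwartz g φ := by
  ext x
  simp [mulSchwartz_apply, mul_assoc]

lemma lineDerivOp_mulSchwartz (g : bddSmooth E) (φ : 𝓢(E, ℂ)) (v : E) :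
    ∂_{v} (mulSchwartz g φ) =
      mulSchwartz (bddSmooth.lineDeriv v g) φ + mulSchwartz g (∂_{v} φ) := by
  ext x
  have hg := (bddSmooth.differentiable g x).hasFDerivAt
  have h := (Complex.ofRealCLM.hasFDerivAt.comp x hg).mul (φ.differentiable x).hasFDerivAt
  simp only [SchwartzMap.lineDerivOp_apply_eq_fderiv, add_apply, mulSchwartz_apply,
    bddSmooth.lineDeriv_apply]
  rw [show ⇑(mulSchwartz g φ) = fun x => (g.1 x : ℂ) * φ x from funext (mulSchwartz_apply g φ)]
  refine congr($(h.fderiv) v).trans ?_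
  simp only [Function.comp_apply, Complex.ofRealCLM_apply, add_apply, smul_apply, smul_eq_mul,
    ContinuousLinearMap.comp_apply]
  ring

end MulSchwartz

/-! ### Distributions of finite Sobolev order -/

section FiniteOrder
open scoped SchwartzMap LineDeriv FourierTransform Laplacian
open TemperedDistribution Filter Topology

variable {E : Type*} [NormedAddCommGroup E] [InnerProductSpace ℝ E] [FiniteDimensional ℝ E]
  [MeasurableSpace E] [BorelSpace E]

variable (E) in
/-- The space `H^{-∞}`, the union of the `L²`-based Sobolev spaces of all orders. -/
def finiteOrder : Submodule ℂ 𝓢'(E, ℂ) where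
  carrier := {f | ∃ s, MemSobolev s 2 f}
  add_mem' := fun ⟨s, hf⟩ ⟨t, hg⟩ =>
    ⟨min s t, (hf.mono (min_le_left s t)).add (hg.mono (min_le_right s t))⟩
  zero_mem' := ⟨0, memSobolev_fun_zero E ℂ 0 2⟩
  smul_mem' c _ := fun ⟨s, hf⟩ => ⟨s, hf.smul c⟩

lemma lp_mem_finiteOrder (f : Lp ℂ 2 (volume : Measure E)) : (f : 𝓢'(E, ℂ)) ∈ finiteOrder E :=
  ⟨0, memSobolev_zero_iff.2 ⟨f, rfl⟩⟩

lemma lineDerivOp_mem_finiteOrder {f : 𝓢'(E, ℂ)} (hf : f ∈ finiteOrder E) (v : E) :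
    ∂_{v} f ∈ finiteOrder E :=
  let ⟨s, hs⟩ := hf
  ⟨s - 1, hs.lineDerivOp⟩

lemma besselPotential_two_eq (f : 𝓢'(E, ℂ)) :
    besselPotential E ℂ 2 f = f + (-((2 * Real.pi) ^ 2)⁻¹) • Δ f := by
  have hsymbol : (fun x : E => (((1 + ‖x‖ ^ 2) ^ ((2 : ℝ) / 2) : ℝ) : ℂ)) =
      (fun _ => 1) + fun x => ((‖x‖ ^ 2 : ℝ) : ℂ) := by
    ext x; simp
  have hsum : fourierMultiplierCLM ℂ ((fun _ => 1) + fun x : E => ((‖x‖ ^ 2 : ℝ) : ℂ)) f =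
      f + fourierMultiplierCLM ℂ (fun x : E => ((‖x‖ ^ 2 : ℝ) : ℂ)) f := by
    simp only [fourierMultiplierCLM_apply]
    rw [smulLeftCLM_add (by fun_prop) (by fun_prop), add_apply, FourierTransform.fourierInv_add]
    simp
  rw [besselPotential, hsymbol, hsum, laplacian_eq_fourierMultiplierCLM]
  match_scalars
  · ring
  · field_simp

/-- `(1 - (2π)⁻²Δ)^n` maps `H^0 = L²` onto `H^{-2n}`. -/
lemma finiteOrder_induction {P : 𝓢'(E, ℂ) → Prop} (lp : ∀ f : Lp ℂ 2 (volume : Measure E), P f)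
    (add : ∀ f g, P f → P g → P (f + g))
    (lineDeriv : ∀ v : E, ∀ f ∈ finiteOrder E, P f → P (∂_{v} f)) :
    ∀ f ∈ finiteOrder E, P f := by
  have key : ∀ n : ℕ, ∀ f, MemSobolev (-(2 * n) : ℝ) 2 f → P f := by
    intro n
    induction n with
    | zero =>
      intro f hf
      obtain ⟨g, rfl⟩ := memSobolev_zero_iff.1 (by simpa using hf)
      exact lp g
    | succ n ih =>
      intro f hf
      set u := besselPotential E ℂ (-2) f
      have hu_mem : MemSobolev (-(2 * n) : ℝ) 2 u :=
        memSobolev_besselPotential_iff.2 (hf.mono (by push_cast; linarith))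
      have hf_eq := (besselPotential_neg_apply_eq_iff 2 f u).1 rfl
      rw [besselPotential_two_eq, laplacian_eq_sum (stdOrthonormalBasis ℝ E), Finset.smul_sum]
        at hf_eq
      rw [← hf_eq]
      have hPu := ih u hu_mem
      have h0 : P 0 := map_zero (Lp.toTemperedDistributionCLM ℂ (volume : Measure E) 2) ▸ lp 0
      refine add _ _ hPu (Finset.sum_induction _ P add h0 fun i _ => ?_)
      rw [← LineDeriv.lineDerivOp_left_smul]
      have hdu := lineDerivOp_mem_finiteOrder ⟨_, hu_mem⟩ (stdOrthonormalBasis ℝ E i)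
      exact lineDeriv _ _ hdu (lineDeriv _ _ ⟨_, hu_mem⟩ hPu)
  rintro f ⟨s, hf⟩
  obtain ⟨n, hn⟩ := exists_nat_ge (-s)
  exact key n f (hf.mono (by linarith))

lemma smulLeftCLM_mem_finiteOrder : ∀ f ∈ finiteOrder E, ∀ g : bddSmooth E,
    smulLeftCLM ℂ (fun x => (g.1 x : ℂ)) f ∈ finiteOrder E := by
  refine finiteOrder_induction (fun f g => ?_) (fun f₁ f₂ h₁ h₂ g => ?_) fun v f _ ih g => ?_
  · obtain ⟨K, hK⟩ := bddSmooth.bounded g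
    have hg : MemLp (fun x => (g.1 x : ℂ)) ⊤ (volume : Measure E) :=
      memLp_top_of_bound (bddSmooth.hasTemperateGrowth g).1.continuous.aestronglyMeasurable K
        (.of_forall fun x => by simpa using hK x)
    rw [← Lp.toTemperedDistribution_smul_eq (r := 2) (bddSmooth.hasTemperateGrowth g) hg]
    exact lp_mem_finiteOrder _
  · rw [map_add]
    exact add_mem (h₁ g) (h₂ g)
  · have leibniz : smulLeftCLM ℂ (fun x => (g.1 x : ℂ)) (∂_{v} f) =
        ∂_{v} (smulLeftCLM ℂ (fun x => (g.1 x : ℂ)) f) -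
          smulLeftCLM ℂ (fun x => ((bddSmooth.lineDeriv v g).1 x : ℂ)) f := by
      ext φ
      change f (-∂_{v} (mulSchwartz g φ)) =
        f (mulSchwartz g (-∂_{v} φ)) - f (mulSchwartz (bddSmooth.lineDeriv v g) φ)
      rw [lineDerivOp_mulSchwartz, map_neg (mulSchwartz g), map_neg, map_neg, map_add]
      ring
    rw [leibniz]
    exact sub_mem (lineDerivOp_mem_finiteOrder (ih g) v) (ih _)

noncomputable instance : SMul (bddSmooth E) (finiteOrder E) where
  smul g f := ⟨smulLeftCLM ℂ (fun x => (g.1 x : ℂ)) f, smulLeftCLM_mem_finiteOrder f.1 f.2 g⟩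

lemma bddSmooth_smul_apply (g : bddSmooth E) (f : finiteOrder E) (φ : 𝓢(E, ℂ)) :
    (g • f).1 φ = f.1 (mulSchwartz g φ) := rfl

noncomputable instance : Module (bddSmooth E) (finiteOrder E) where
  one_smul f := by
    ext φ
    rw [bddSmooth_smul_apply, map_one]
    rfl
  mul_smul g h f := by
    ext φ
    rw [bddSmooth_smul_apply, mul_comm, map_mul]
    rfl
  smul_zero g := Subtype.ext (map_zero _)
  smul_add g f₁ f₂ := Subtype.ext (map_add _ _ _)
  add_smul g h f := by
    ext φ
    rw [bddSmooth_smul_apply, map_add, add_apply, map_add]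
    rfl
  zero_smul f := by
    ext φ
    rw [bddSmooth_smul_apply, map_zero, zero_apply, map_zero]
    rfl

instance : IsScalarTower ℝ (bddSmooth E) (finiteOrder E) where
  smul_assoc c g f := by
    ext φ
    rw [bddSmooth_smul_apply, mulSchwartz_smul]
    exact ContinuousLinearMap.map_smul_of_tower f.1 c _

lemma integrable_schwartz_mul_lp (φ : 𝓢(E, ℂ)) (f : Lp ℂ 2 (volume : Measure E)) :
    Integrable fun x => φ x * f x :=
  (φ.memLp 2).integrable_mul (Lp.memLp f)

lemma tendsto_lp_mulSchwartz_dilate (f : Lp ℂ 2 (volume : Measure E)) (g : bddSmooth E)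
    (φ : 𝓢(E, ℂ)) :
    Tendsto (fun ε : ℝ => (f : 𝓢'(E, ℂ)) (mulSchwartz (bddSmooth.dilate ε g) φ)) (𝓝 0)
      (𝓝 (g.1 0 * (f : 𝓢'(E, ℂ)) φ)) := by
  obtain ⟨K, hK⟩ := bddSmooth.bounded g
  have hint := integrable_schwartz_mul_lp φ f
  simp only [Lp.toTemperedDistribution_apply, mulSchwartz_apply, smul_eq_mul, mul_assoc,
    ← integral_const_mul]
  refine tendsto_integral_filter_of_dominated_convergence (fun x => K * ‖φ x * f x‖)
    (.of_forall fun ε => ?_) (.of_forall fun ε => .of_forall fun x => ?_) (hint.norm.const_mul K)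
    (.of_forall fun x => ?_)
  · exact (bddSmooth.hasTemperateGrowth (bddSmooth.dilate ε g)).1
      |>.continuous.aestronglyMeasurable.mul hint.aestronglyMeasurable
  · rw [norm_mul, Complex.norm_real]
    gcongr
    exact hK _
  · refine Tendsto.mul_const _ ((Complex.continuous_ofReal.tendsto _).comp ?_)
    have hc : Continuous fun ε : ℝ => g.1 (ε • x) :=
      (bddSmooth.differentiable g).continuous.comp (by fun_prop)
    exact hc.tendsto' 0 (g.1 0) (by rw [zero_smul])

lemma tendsto_mulSchwartz_dilate : ∀ f ∈ finiteOrder E, ∀ (g : bddSmooth E) (φ : 𝓢(E, ℂ)),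
    Tendsto (fun ε : ℝ => f (mulSchwartz (bddSmooth.dilate ε g) φ)) (𝓝 0)
      (𝓝 (g.1 0 * f φ)) := by
  refine finiteOrder_induction (fun f => tendsto_lp_mulSchwartz_dilate f)
    (fun f₁ f₂ h₁ h₂ g φ => ?_) fun v f _ ih g φ => ?_
  · simpa only [add_apply, mul_add] using (h₁ g φ).add (h₂ g φ)
  · have leibniz (ε : ℝ) : ∂_{v} f (mulSchwartz (bddSmooth.dilate ε g) φ) =
        -(ε * f (mulSchwartz (bddSmooth.dilate ε (bddSmooth.lineDeriv v g)) φ) +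
          f (mulSchwartz (bddSmooth.dilate ε g) (∂_{v} φ))) := by
      rw [lineDerivOp_apply_apply, lineDerivOp_mulSchwartz, bddSmooth.lineDeriv_dilate, map_neg,
        map_add, mulSchwartz_smul, ← Complex.real_smul]
      congr 2
      exact ContinuousLinearMap.map_smul_of_tower f ε _
    have hε : Tendsto (fun ε : ℝ => (ε : ℂ)) (𝓝 0) (𝓝 0) :=
      Complex.continuous_ofReal.tendsto' 0 0 rfl
    simpa [leibniz] using ((hε.mul (ih (bddSmooth.lineDeriv v g) φ)).add (ih g (∂_{v} φ))).neg

lemma eq_zero_of_forall_hasCompactSupport {f : 𝓢'(E, ℂ)} (hf : f ∈ finiteOrder E)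
    (h : ∀ φ : 𝓢(E, ℂ), HasCompactSupport φ → f φ = 0) : f = 0 := by
  let χ : ContDiffBump (0 : E) := default
  let g : bddSmooth E := ⟨χ, mem_bddSmooth_of_hasCompactSupport χ.contDiff χ.hasCompactSupport⟩
  ext φ
  have hlim := (tendsto_mulSchwartz_dilate f hf g φ).mono_left (nhdsWithin_le_nhds (s := {0}ᶜ))
  have hcut : ∀ᶠ ε in 𝓝[≠] (0 : ℝ), f (mulSchwartz (bddSmooth.dilate ε g) φ) = 0 := by
    filter_upwards [self_mem_nhdsWithin] with ε hε
    refine h _ ?_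
    have hχ : HasCompactSupport fun x => χ (ε • x) :=
      χ.hasCompactSupport.comp_homeomorph (Homeomorph.smulOfNeZero ε hε)
    have hφ : ⇑(mulSchwartz (bddSmooth.dilate ε g) φ) = fun x => χ (ε • x) • φ x := by
      ext x; simp [mulSchwartz_apply, bddSmooth.dilate, g]
    rw [hφ]
    exact hχ.smul_right
  have h0 := tendsto_nhds_unique_of_eventuallyEq hlim tendsto_const_nhds hcut
  have hg : g.1 0 = 1 := χ.one_of_mem_closedBall (by simp [χ.rIn_pos.le])
  simpa [hg] using h0

/-! ### Constant-coefficient operators -/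

lemma ae_mul_lp_eq_zero {p : E → ℂ} (hp : p.HasTemperateGrowth) {g : Lp ℂ 2 (volume : Measure E)}
    (hpg : smulLeftCLM ℂ p (g : 𝓢'(E, ℂ)) = 0) : ∀ᵐ ξ, p ξ * g ξ = 0 := by
  have hloc : LocallyIntegrable (fun ξ => p ξ * g ξ) := by
    rw [← locallyIntegrableOn_univ]
    exact (((Lp.memLp g).locallyIntegrable (by norm_num)).locallyIntegrableOn _).continuousOn_mul
      hp.1.continuous.continuousOn isOpen_univ.isLocallyClosed
  refine ae_eq_zero_of_integral_contDiff_smul_eq_zero hloc fun φ hφ hφs => ?_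
  have hψs : HasCompactSupport fun ξ => (φ ξ : ℂ) := hφs.comp_left Complex.ofReal_zero
  let ψ := hψs.toSchwartzMap (Complex.ofRealCLM.contDiff.comp hφ)
  have h0 := congr($hpg ψ)
  rw [smulLeftCLM_apply_apply, Lp.toTemperedDistribution_apply] at h0
  refine (integral_congr_ae (.of_forall fun ξ => ?_)).trans h0
  have hψ : ψ ξ = φ ξ := rfl
  rw [SchwartzMap.smulLeftCLM_apply_apply hp, hψ, Complex.real_smul, smul_eq_mul,
    smul_eq_mul]
  ring

/-- `T` is the Fourier multiplier with symbol `p`. -/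
structure HasSymbol (T : Module.End ℝ (finiteOrder E)) (p : E → ℂ) : Prop where
  hasTemperateGrowth : p.HasTemperateGrowth
  fourier_eq : ∀ f, 𝓕 (T f).1 = smulLeftCLM ℂ p (𝓕 f.1)

namespace HasSymbol
variable {T T' : Module.End ℝ (finiteOrder E)} {p p' : E → ℂ}

lemma add (hT : HasSymbol T p) (hT' : HasSymbol T' p') : HasSymbol (T + T') (p + p') where
  hasTemperateGrowth := hT.1.add hT'.1
  fourier_eq f := by
    rw [smulLeftCLM_add hT.1 hT'.1]
    exact (FourierTransform.fourier_add _ _).trans congr($(hT.2 f) + $(hT'.2 f))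

lemma mul (hT : HasSymbol T p) (hT' : HasSymbol T' p') : HasSymbol (T * T') (p * p') where
  hasTemperateGrowth := hT.1.mul hT'.1
  fourier_eq f := by
    rw [mul_comm, ← smulLeftCLM_smulLeftCLM_apply hT'.1 hT.1, ← hT'.2, ← hT.2]
    rfl

lemma algebraMap (r : ℝ) :
    HasSymbol (algebraMap ℝ (Module.End ℝ (finiteOrder E)) r) (fun _ => (r : ℂ)) where
  hasTemperateGrowth := .const _
  fourier_eq f := by
    rw [smulLeftCLM_const, ← FourierTransform.fourier_smul]
    rfl

lemma one : HasSymbol (1 : Module.End ℝ (finiteOrder E)) 1 := by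
  convert algebraMap (E := E) 1
  · exact (map_one _).symm
  · simp

lemma smul (hT : HasSymbol T p) (r : ℝ) : HasSymbol (r • T) (fun ξ => r * p ξ) := by
  rw [Algebra.smul_def]
  exact (algebraMap r).mul hT

lemma sub (hT : HasSymbol T p) (hT' : HasSymbol T' p') : HasSymbol (T - T') (p - p') := by
  convert hT.add (hT'.smul (-1)) using 1
  · module
  · ext; simp [sub_eq_add_neg]

lemma pow (hT : HasSymbol T p) (n : ℕ) : HasSymbol (T ^ n) (p ^ n) := by
  induction n with
  | zero => exact one
  | succ n ih => simpa only [pow_succ] using ih.mul hT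

lemma eq (hT : HasSymbol T p) (hT' : HasSymbol T' p) : T = T' := by
  ext f : 2
  exact (FourierTransform.fourierEquiv ℂ 𝓢'(E, ℂ)).injective
    ((hT.2 f).trans (hT'.2 f).symm)

lemma commute (hT : HasSymbol T p) (hT' : HasSymbol T' p') : Commute T T' :=
  (hT.mul hT').eq (mul_comm p p' ▸ hT'.mul hT)

lemma exists_of_bounded (hp : p.HasTemperateGrowth) (hb : ∃ C, ∀ ξ, ‖p ξ‖ ≤ C) :
    ∃ T : Module.End ℝ (finiteOrder E), HasSymbol T p := by
  have hmem (f : finiteOrder E) : fourierMultiplierCLM ℂ p f.1 ∈ finiteOrder E :=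
    let ⟨s, hs⟩ := f.2
    ⟨s, hs.fourierMultiplierCLM_of_bounded hp hb⟩
  refine ⟨(((fourierMultiplierCLM ℂ p).toLinearMap.domRestrict _).codRestrict _
    hmem).restrictScalars ℝ, hp, fun f => ?_⟩
  change 𝓕 (fourierMultiplierCLM ℂ p f.1) = _
  rw [fourierMultiplierCLM_apply, FourierTransform.fourier_fourierInv_eq]

lemma isUnit (hT : HasSymbol T p) (hp' : p'.HasTemperateGrowth) (hb : ∃ C, ∀ ξ, ‖p' ξ‖ ≤ C)
    (h : p * p' = 1) : IsUnit T := by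
  obtain ⟨T', hT'⟩ := exists_of_bounded hp' hb
  have hTT' : T * T' = 1 := (hT.mul hT').eq (h ▸ one)
  exact ⟨⟨T, T', hTT', (hT'.commute hT).trans hTT'⟩, rfl⟩

lemma injective (hT : HasSymbol T p) (h : ∀ᵐ ξ, p ξ ≠ 0) : Function.Injective T := by
  refine (injective_iff_map_eq_zero T).2 fun f hf => ?_
  obtain ⟨s, hs⟩ := f.2
  obtain ⟨g, hg⟩ := memSobolev_iff_exists_smulLeftCLM_fourier.1 hs
  have hpg : smulLeftCLM ℂ p (g : 𝓢'(E, ℂ)) = 0 := by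
    rw [← hg, smulLeftCLM_smulLeftCLM_apply (by fun_prop) hT.1, mul_comm,
      ← smulLeftCLM_smulLeftCLM_apply hT.1 (by fun_prop), ← hT.2, hf]
    simp
  have hg0 : g = 0 := by
    refine Lp.ext ?_
    filter_upwards [ae_mul_lp_eq_zero hT.1 hpg, h, Lp.coeFn_zero ℂ 2 (volume : Measure E)]
      with ξ hmul hξ hzero
    exact ((mul_eq_zero.1 hmul).resolve_left hξ).trans hzero.symm
  have hbessel : besselPotential E ℂ s f.1 = 0 := by
    apply (FourierTransform.fourierEquiv ℂ 𝓢'(E, ℂ)).injective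
    rw [map_zero, FourierTransform.fourierEquiv_apply,
      fourier_besselPotential_eq_smulLeftCLM_fourier_apply, hg, hg0]
    exact map_zero (Lp.toTemperedDistributionCLM ℂ volume 2)
  have hf0 := (besselPotential_neg_apply_eq_iff s 0 f.1).2 hbessel
  exact Subtype.ext (hf0.symm.trans (map_zero _))

end HasSymbol

/-- The conjugate `e^{⟨c, x⟩} ∂_v e^{-⟨c, x⟩}` of a derivative, for any `c` with `⟨c, v⟩ = a`. -/
noncomputable def weightedDeriv (v : E) (a : ℝ) : Module.End ℝ (finiteOrder E) where
  toFun f := ⟨∂_{v} f.1, lineDerivOp_mem_finiteOrder f.2 v⟩ - a • f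
  map_add' f g := by
    ext φ
    change (f.1 + g.1) (-∂_{v} φ) - a • (f.1 + g.1) φ =
      (f.1 (-∂_{v} φ) - a • f.1 φ) + (g.1 (-∂_{v} φ) - a • g.1 φ)
    simp only [add_apply]
    module
  map_smul' r f := by
    ext φ
    change r • f.1 (-∂_{v} φ) - a • r • f.1 φ = r • (f.1 (-∂_{v} φ) - a • f.1 φ)
    module

lemma weightedDeriv_apply (v : E) (a : ℝ) (f : finiteOrder E) (φ : 𝓢(E, ℂ)) :
    (weightedDeriv v a f).1 φ = f.1 (-(∂_{v} φ + a • φ)) := by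
  change f.1 (-∂_{v} φ) - a • f.1 φ = _
  rw [neg_add, map_add, map_neg f.1 (a • φ), sub_eq_add_neg]
  congr 2
  exact (ContinuousLinearMap.map_smul_of_tower f.1 a φ).symm

lemma hasSymbol_weightedDeriv (v : E) (a : ℝ) :
    HasSymbol (weightedDeriv v a) fun ξ => 2 * Real.pi * Complex.I * inner ℝ ξ v - a where
  hasTemperateGrowth := by fun_prop
  fourier_eq f := by
    change 𝓕 ((∂_{v} f.1 : 𝓢'(E, ℂ)) - (a : ℂ) • f.1) = _
    have hpq : (fun ξ : E => 2 * Real.pi * Complex.I * inner ℝ ξ v - a) =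
      (2 * Real.pi * Complex.I) • (fun ξ : E => ((inner ℝ ξ v : ℝ) : ℂ)) - fun _ => (a : ℂ) := rfl
    rw [hpq, smulLeftCLM_sub (by fun_prop) (by fun_prop), smulLeftCLM_smul (by fun_prop),
      sub_apply, smulLeftCLM_const, smul_apply, ← fourier_lineDerivOp_eq,
      ← FourierTransform.fourier_smul]
    exact map_sub (FourierTransform.fourierEquiv ℂ 𝓢'(E, ℂ)) _ _

lemma weightedDeriv_smul (v : E) (a : ℝ) (g : bddSmooth E) (f : finiteOrder E) :
    weightedDeriv v a (g • f) = bddSmooth.lineDeriv v g • f + g • weightedDeriv v a f := by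
  ext φ
  change _ = (bddSmooth.lineDeriv v g • f).1 φ + (g • weightedDeriv v a f).1 φ
  simp only [weightedDeriv_apply, bddSmooth_smul_apply]
  rw [← map_add, lineDerivOp_mulSchwartz, map_neg, map_add,
    ContinuousLinearMap.map_smul_of_tower (mulSchwartz g) a φ]
  congr 1
  module

/-- Differentiation in the directions `v`, `w`, conjugated by an exponential. -/
noncomputable def weightedConnection (v w : E) (a b : ℝ) :
    FlatConnection (bddSmooth.derivationPair v w) (finiteOrder E) where
  X := weightedDeriv v a
  Y := weightedDeriv w b
  comm f := congr($((hasSymbol_weightedDeriv v a).commute (hasSymbol_weightedDeriv w b)) f)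
  X_smul g f := weightedDeriv_smul v a g f
  Y_smul g f := weightedDeriv_smul w b g f

lemma hasTemperateGrowth_inv_one_sub_mul_I :
    (fun x : ℝ => (1 - x * Complex.I)⁻¹).HasTemperateGrowth := by
  have heq : (fun x : ℝ => (1 - x * Complex.I)⁻¹) =
      fun x : ℝ => (1 + x * Complex.I) * (((1 + ‖x‖ ^ 2) ^ (-1 : ℝ) : ℝ) : ℂ) := by
    ext x
    have hx : (1 - x * Complex.I) * (1 + x * Complex.I) = ((1 + ‖x‖ ^ 2 : ℝ) : ℂ) := by
      rw [Real.norm_eq_abs, sq_abs]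
      push_cast
      linear_combination (-(x : ℂ) ^ 2) * Complex.I_sq
    have hpos : ((1 + ‖x‖ ^ 2 : ℝ) : ℂ) ≠ 0 := by
      exact_mod_cast (by positivity : (1 + ‖x‖ ^ 2 : ℝ) ≠ 0)
    rw [Real.rpow_neg_one, Complex.ofReal_inv, ← hx, mul_inv]
    rw [← hx] at hpos
    field_simp [left_ne_zero_of_mul hpos, right_ne_zero_of_mul hpos]
  rw [heq]
  fun_prop

lemma norm_inv_one_sub_mul_I_le (x : ℝ) : ‖(1 - x * Complex.I)⁻¹‖ ≤ 1 := by
  rw [norm_inv]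
  refine inv_le_one_of_one_le₀ ?_
  simpa using Complex.abs_re_le_norm (1 - x * Complex.I)

lemma spectrum_weightedDeriv_subset (v : E) (a : ℝ) :
    spectrum ℝ (weightedDeriv v a) ⊆ {-a} := by
  intro r hr
  by_contra hra
  have hc : r + a ≠ 0 := fun h => hra (eq_neg_of_add_eq_zero_left h)
  let L : E →L[ℝ] ℝ := (2 * Real.pi / (r + a)) • (innerSL ℝ v)
  have hL : (fun ξ => (1 - L ξ * Complex.I)⁻¹).HasTemperateGrowth :=
    hasTemperateGrowth_inv_one_sub_mul_I.comp L.hasTemperateGrowth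
  have hT := (HasSymbol.algebraMap r).sub (hasSymbol_weightedDeriv v a)
  refine hr (hT.isUnit (p' := fun ξ => ((r + a)⁻¹ : ℂ) * (1 - L ξ * Complex.I)⁻¹) (by fun_prop)
    ⟨‖((r + a)⁻¹ : ℂ)‖ * 1, fun ξ => ?_⟩ ?_)
  · rw [norm_mul]
    gcongr
    exact norm_inv_one_sub_mul_I_le _
  · ext ξ
    have hc' : (r + a : ℂ) ≠ 0 := by exact_mod_cast hc
    have hLξ : (r + a : ℂ) * L ξ = 2 * Real.pi * inner ℝ ξ v := by
      simp only [L, smul_apply, coe_innerSL_apply, smul_eq_mul, Complex.ofReal_mul,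
        Complex.ofReal_div, Complex.ofReal_ofNat, Complex.ofReal_add, real_inner_comm v ξ]
      field_simp
    have hp : (r : ℂ) - (2 * Real.pi * Complex.I * inner ℝ ξ v - a) =
        (r + a) * (1 - L ξ * Complex.I) := by
      linear_combination Complex.I * hLξ
    have hne : (1 - L ξ * Complex.I) ≠ 0 := fun h => by simpa using congr(Complex.re $h)
    simp only [Pi.mul_apply, Pi.sub_apply, Pi.one_apply, hp]
    field_simp

end FiniteOrder

section Plane
open Filter

lemma ae_ne_zero_of_finite_sections {p : ℂ → ℂ} (hp : Continuous p)
    (h : ∀ x : ℝ, {y : ℝ | p ⟨x, y⟩ = 0}.Finite) : ∀ᵐ ξ : ℂ, p ξ ≠ 0 := by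
  have hcont : Continuous fun q : ℝ × ℝ => p ⟨q.1, q.2⟩ :=
    hp.comp Complex.equivRealProdCLM.symm.continuous
  have hprod : ∀ᵐ q : ℝ × ℝ, p ⟨q.1, q.2⟩ ≠ 0 := by
    rw [Measure.volume_eq_prod, Measure.ae_prod_iff_ae_ae]
    · exact .of_forall fun x => by simpa [ae_iff] using (h x).measure_zero volume
    · exact (hcont.measurable (measurableSet_singleton 0)).compl
  exact Complex.volume_preserving_equiv_real_prod.quasiMeasurePreserving.ae hprod

open Polynomial in
lemma finite_setOf_quadratic_eq_zero {a : ℂ} (ha : a ≠ 0) (b c : ℂ) :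
    {z : ℂ | a * z ^ 2 + b * z + c = 0}.Finite := by
  have hne : C a * X ^ 2 + C b * X + C c ≠ 0 := fun h => by
    simpa [h] using natDegree_quadratic (b := b) (c := c) ha
  simpa using finite_setOfPred_isRoot hne

lemma hasSymbol_weightedConnection_X (a b : ℝ) :
    HasSymbol (weightedConnection (1 : ℂ) Complex.I a b).X
      fun ξ => 2 * Real.pi * Complex.I * ξ.re - a := by
  convert hasSymbol_weightedDeriv (1 : ℂ) a using 3
  · rfl
  · simp [Complex.inner]

lemma hasSymbol_weightedConnection_Y (a b : ℝ) :
    HasSymbol (weightedConnection (1 : ℂ) Complex.I a b).Y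
      fun ξ => 2 * Real.pi * Complex.I * ξ.im - b := by
  convert hasSymbol_weightedDeriv Complex.I b using 3
  · rfl
  · simp [Complex.inner]

lemma admissible_weightedConnection (a b : ℝ) :
    Admissible (weightedConnection (1 : ℂ) Complex.I a b) a where
  spectrum_X_subset := spectrum_weightedDeriv_subset 1 a
  injective β γ := by
    have hT := ((hasSymbol_weightedConnection_Y a b).sub
      ((hasSymbol_weightedConnection_X a b).smul β)).sub (.algebraMap γ)
    refine hT.injective (ae_ne_zero_of_finite_sections hT.1.1.continuous fun x => ?_)
    refine Set.Subsingleton.finite fun y hy y' hy' => ?_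
    have hmul : (2 * Real.pi * Complex.I) * y = (2 * Real.pi * Complex.I) * (y' : ℂ) := by
      simp only [Pi.sub_apply, Set.mem_ofPred_eq] at hy hy'
      linear_combination hy - hy'
    exact_mod_cast mul_left_cancel₀ Complex.two_pi_I_ne_zero hmul

lemma injective_linearizedKP_zero (a b b₁ b₂ : ℝ) :
    Function.Injective (linearizedKP (weightedConnection (1 : ℂ) Complex.I a b) b₁ b₂ 0) := by
  have hX := hasSymbol_weightedConnection_X a b
  have hY := hasSymbol_weightedConnection_Y a b
  have hT := ((((hY.pow 2).smul 3).sub ((hY.mul hX).smul (4 * b₂))).add (hX.pow 4)).sub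
    ((hX.pow 2).smul (4 * b₁))
  rw [linearizedKP_zero]
  refine hT.injective (ae_ne_zero_of_finite_sections hT.1.1.continuous fun x => ?_)
  set σ : ℂ := 2 * Real.pi * Complex.I * x - a
  have hinj : Function.Injective fun y : ℝ => 2 * Real.pi * Complex.I * (y : ℂ) - b :=
    (sub_left_injective.comp (mul_right_injective₀ Complex.two_pi_I_ne_zero)).comp
      Complex.ofReal_injective
  refine ((finite_setOf_quadratic_eq_zero three_ne_zero (-(4 * b₂ * σ))
    (σ ^ 4 - 4 * b₁ * σ ^ 2)).preimage hinj.injOn).subset fun y hy => ?_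
  simp only [Set.mem_ofPred_eq, Pi.sub_apply, Pi.add_apply, Pi.mul_apply, Pi.pow_apply] at hy
  simp only [Set.mem_preimage, Set.mem_ofPred_eq]
  push_cast at hy
  linear_combination hy

end Plane

/-! ### The P-type soliton -/

section Slice
variable {F : Type*} [NormedAddCommGroup F] [NormedSpace ℝ F] {f : ℂ → F} {f' : ℂ →L[ℝ] F} {z : ℂ}

lemma hasDerivAt_slice_re (hf : HasFDerivAt f f' z) :
    HasDerivAt (fun s : ℝ => f ⟨s, z.im⟩) (f' 1) z.re := by
  have hline : HasDerivAt (fun s : ℝ => (⟨s, z.im⟩ : ℂ)) 1 z.re := by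
    simp only [Complex.mk_eq_add_mul_I]
    exact (Complex.ofRealCLM.hasDerivAt (x := z.re)).add_const (z.im * Complex.I)
  exact hf.comp_hasDerivAt z.re hline

lemma hasDerivAt_slice_im (hf : HasFDerivAt f f' z) :
    HasDerivAt (fun s : ℝ => f ⟨z.re, s⟩) (f' Complex.I) z.im := by
  have hline : HasDerivAt (fun s : ℝ => (⟨z.re, s⟩ : ℂ)) Complex.I z.im := by
    simp only [Complex.mk_eq_add_mul_I]
    simpa using
      ((Complex.ofRealCLM.hasDerivAt (x := z.im)).mul_const Complex.I).const_add (z.re : ℂ)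
  exact hf.comp_hasDerivAt z.im hline

end Slice

section PType

/-- The exponential `e^{κX + κ²Y}`, with the point `(X, Y)` encoded as `X + iY`. -/
noncomputable def expo (κ : ℝ) (z : ℂ) : ℝ := Real.exp (κ * z.re + κ ^ 2 * z.im)

lemma expo_pos (κ : ℝ) (z : ℂ) : 0 < expo κ z := Real.exp_pos _

lemma expo_mul_expo (κ κ' : ℝ) (z : ℂ) :
    expo κ z * expo κ' z = Real.exp ((κ + κ') * z.re + (κ ^ 2 + κ' ^ 2) * z.im) := by
  rw [expo, expo, ← Real.exp_add]
  ring_nf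

lemma hasFDerivAt_expo (κ : ℝ) (z : ℂ) : HasFDerivAt (expo κ)
    (expo κ z • (κ • Complex.reCLM + κ ^ 2 • Complex.imCLM)) z :=
  ((Complex.reCLM.hasFDerivAt.const_mul κ).add (Complex.imCLM.hasFDerivAt.const_mul (κ ^ 2))).exp

/-- The underlying function of `kink`. -/
noncomputable def kinkFun (k k' : ℝ) (z : ℂ) : ℝ :=
  (k * expo k z + k' * expo k' z) / (expo k z + expo k' z)

lemma kinkFun_sub (k k' : ℝ) (z : ℂ) :
    kinkFun k k' z - k = (k' - k) * expo k' z / (expo k z + expo k' z) := by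
  have := expo_pos k z
  have := expo_pos k' z
  rw [kinkFun]; field_simp; ring

lemma sub_kinkFun (k k' : ℝ) (z : ℂ) :
    k' - kinkFun k k' z = (k' - k) * expo k z / (expo k z + expo k' z) := by
  have := expo_pos k z
  have := expo_pos k' z
  rw [kinkFun]; field_simp; ring

lemma hasFDerivAt_kinkFun (k k' : ℝ) (z : ℂ) : HasFDerivAt (kinkFun k k')
    (((k' - kinkFun k k' z) * (kinkFun k k' z - k)) •
      (Complex.reCLM + (k + k') • Complex.imCLM)) z := by
  have hk := hasFDerivAt_expo k z
  have hk' := hasFDerivAt_expo k' z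
  have hpos := expo_pos k z
  have hpos' := expo_pos k' z
  have hne : expo k z + expo k' z ≠ 0 := by positivity
  have hinv := (hasDerivAt_inv hne).comp_hasFDerivAt z (hk.add hk')
  refine (((hk.const_mul k).add (hk'.const_mul k')).mul hinv).congr_fderiv ?_
  rw [kinkFun_sub, sub_kinkFun]
  ext v
  simp only [Pi.add_apply, smul_add, neg_smul, smul_neg, Function.comp_apply, add_apply, neg_apply,
    smul_apply, Complex.reCLM_apply, smul_eq_mul, Complex.imCLM_apply]
  field_simp
  ring

lemma norm_kinkFun_le (k k' : ℝ) (z : ℂ) : ‖kinkFun k k' z‖ ≤ max |k| |k'| := by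
  have hpos := expo_pos k z
  have hpos' := expo_pos k' z
  rw [kinkFun, norm_div, Real.norm_of_nonneg (by positivity : 0 ≤ expo k z + expo k' z),
    div_le_iff₀ (by positivity), mul_add]
  refine (norm_add_le _ _).trans (add_le_add ?_ ?_) <;>
    rw [norm_mul, Real.norm_of_nonneg (expo_pos _ z).le, Real.norm_eq_abs] <;> gcongr
  exacts [le_max_left _ _, le_max_right _ _]

lemma kinkFun_mem_bddSmooth (k k' : ℝ) : kinkFun k k' ∈ bddSmooth ℂ := by
  refine mem_bddSmooth_of_fderiv (hasFDerivAt_kinkFun k k') ⟨_, norm_kinkFun_le k k'⟩ fun n hn => ?_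
  have hriccati : BddContDiff n fun z => (k' - kinkFun k k' z) * (kinkFun k k' z - k) := by
    have hleft := (BddContDiff.const n k').add
      ((BddContDiff.const n (-1 : ℝ)).bilinear (ContinuousLinearMap.mul ℝ ℝ) hn)
    have hright := hn.add (.const n (-k))
    simp only [ContinuousLinearMap.mul_apply', neg_one_mul] at hleft hright
    exact hleft.bilinear (ContinuousLinearMap.mul ℝ ℝ) hright
  exact hriccati.bilinear (ContinuousLinearMap.lsmul ℝ ℝ) (.const n _)

/-- The logarithmic `X`-derivative of `e^{kX + k²Y} + e^{k'X + k'²Y}`. -/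
noncomputable def kink (k k' : ℝ) : bddSmooth ℂ := ⟨kinkFun k k', kinkFun_mem_bddSmooth k k'⟩

lemma lineSoliton_kink (k k' : ℝ) :
    LineSoliton (bddSmooth.derivationPair 1 Complex.I) k k' (kink k k') := by
  have lineDeriv_eq (v : ℂ) (z : ℂ) : (bddSmooth.lineDeriv v (kink k k')).1 z =
      (k' - kinkFun k k' z) * (kinkFun k k' z - k) * (v.re + (k + k') * v.im) := by
    rw [bddSmooth.lineDeriv_apply, kink, (hasFDerivAt_kinkFun k k' z).fderiv]
    simp [mul_add]
  refine ⟨Subtype.ext (funext fun z => (lineDeriv_eq 1 z).trans ?_),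
    Subtype.ext (funext fun z => (lineDeriv_eq Complex.I z).trans ?_)⟩
  · simp [kink]
  · change _ = (k + k') * (bddSmooth.lineDeriv 1 (kink k k')).1 z
    rw [lineDeriv_eq]
    simp [mul_comm]

/-- The quotient of the tau function of the P-type soliton by those of its two line solitons. -/
noncomputable def dressing (κ₁ κ₂ κ₃ κ₄ : ℝ) : bddSmooth ℂ :=
  (kink κ₂ κ₃ - algebraMap ℝ _ κ₁) *
      (algebraMap ℝ _ (κ₄ - κ₁)⁻¹ * (algebraMap ℝ _ κ₄ - kink κ₁ κ₄)) +
    (algebraMap ℝ _ κ₄ - kink κ₂ κ₃) *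
      (algebraMap ℝ _ (κ₄ - κ₁)⁻¹ * (kink κ₁ κ₄ - algebraMap ℝ _ κ₁))

lemma dressing_apply (κ₁ κ₂ κ₃ κ₄ : ℝ) (z : ℂ) : (dressing κ₁ κ₂ κ₃ κ₄).1 z =
    (kinkFun κ₂ κ₃ z - κ₁) * ((κ₄ - κ₁)⁻¹ * (κ₄ - kinkFun κ₁ κ₄ z)) +
      (κ₄ - kinkFun κ₂ κ₃ z) * ((κ₄ - κ₁)⁻¹ * (kinkFun κ₁ κ₄ z - κ₁)) := rfl

variable {κ₁ κ₂ κ₃ κ₄ : ℝ}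

lemma Ptau_eq (h : κ₁ < κ₄) (z : ℂ) : Ptau κ₁ κ₂ κ₃ κ₄ z.re z.im =
    (expo κ₂ z + expo κ₃ z) * (expo κ₁ z + expo κ₄ z) * (dressing κ₁ κ₂ κ₃ κ₄).1 z := by
  have := expo_pos κ₁ z
  have := expo_pos κ₂ z
  have := expo_pos κ₃ z
  have := expo_pos κ₄ z
  have := sub_pos.2 h
  simp only [Ptau, ← expo_mul_expo]
  rw [dressing_apply, kinkFun_sub κ₁, sub_kinkFun κ₁, kinkFun]
  field_simp
  ring

lemma le_dressing (h₁₂ : κ₁ < κ₂) (h₂₃ : κ₂ < κ₃) (h₃₄ : κ₃ < κ₄) (z : ℂ) :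
    min (κ₂ - κ₁) (κ₄ - κ₃) ≤ (dressing κ₁ κ₂ κ₃ κ₄).1 z := by
  have h₁₄ : κ₁ < κ₄ := h₁₂.trans (h₂₃.trans h₃₄)
  have le_kink {k k' : ℝ} (h : k < k') : k ≤ kinkFun k k' z := by
    have := sub_pos.2 h
    have := expo_pos k z
    have := expo_pos k' z
    rw [← sub_nonneg, kinkFun_sub]
    positivity
  have kink_le {k k' : ℝ} (h : k < k') : kinkFun k k' z ≤ k' := by
    have := sub_pos.2 h
    have := expo_pos k z
    have := expo_pos k' z
    rw [← sub_nonneg, sub_kinkFun]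
    positivity
  have hweight : (κ₄ - κ₁)⁻¹ * (κ₄ - kinkFun κ₁ κ₄ z) +
      (κ₄ - κ₁)⁻¹ * (kinkFun κ₁ κ₄ z - κ₁) = 1 := by
    have := (sub_pos.2 h₁₄).ne'
    field_simp
    ring
  have hc : 0 < (κ₄ - κ₁)⁻¹ := inv_pos.2 (sub_pos.2 h₁₄)
  calc min (κ₂ - κ₁) (κ₄ - κ₃)
      = min (κ₂ - κ₁) (κ₄ - κ₃) * ((κ₄ - κ₁)⁻¹ * (κ₄ - kinkFun κ₁ κ₄ z)) +
        min (κ₂ - κ₁) (κ₄ - κ₃) * ((κ₄ - κ₁)⁻¹ * (kinkFun κ₁ κ₄ z - κ₁)) := by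
          rw [← mul_add, hweight, mul_one]
    _ ≤ (dressing κ₁ κ₂ κ₃ κ₄).1 z := by
      rw [dressing_apply]
      gcongr
      · exact mul_nonneg hc.le (sub_nonneg.2 (kink_le h₁₄))
      · exact (min_le_left _ _).trans (sub_le_sub_right (le_kink h₂₃) _)
      · exact mul_nonneg hc.le (sub_nonneg.2 (le_kink h₁₄))
      · exact (min_le_right _ _).trans (sub_le_sub_left (kink_le h₂₃) _)

lemma dressing_pos (h₁₂ : κ₁ < κ₂) (h₂₃ : κ₂ < κ₃) (h₃₄ : κ₃ < κ₄) (z : ℂ) :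
    0 < (dressing κ₁ κ₂ κ₃ κ₄).1 z :=
  (lt_min (sub_pos.2 h₁₂) (sub_pos.2 h₃₄)).trans_le (le_dressing h₁₂ h₂₃ h₃₄ z)

lemma isUnit_dressing (h₁₂ : κ₁ < κ₂) (h₂₃ : κ₂ < κ₃) (h₃₄ : κ₃ < κ₄) :
    IsUnit (dressing κ₁ κ₂ κ₃ κ₄) := by
  have hpos : 0 < min (κ₂ - κ₁) (κ₄ - κ₃) := lt_min (sub_pos.2 h₁₂) (sub_pos.2 h₃₄)
  refine IsUnit.of_mul_eq_one ⟨(dressing κ₁ κ₂ κ₃ κ₄).1⁻¹, bddSmooth.inv_mem (dressing ..).2 hpos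
    (le_dressing h₁₂ h₂₃ h₃₄)⟩ (Subtype.ext (funext fun z => ?_))
  exact mul_inv_cancel₀ (dressing_pos h₁₂ h₂₃ h₃₄ z).ne'

lemma hasDerivAt_log_expo_add_expo (k k' : ℝ) (z : ℂ) :
    HasDerivAt (fun s : ℝ => Real.log (expo k ⟨s, z.im⟩ + expo k' ⟨s, z.im⟩)) (kinkFun k k' z)
      z.re := by
  have hne : expo k z + expo k' z ≠ 0 := (add_pos (expo_pos k z) (expo_pos k' z)).ne'
  refine (hasDerivAt_slice_re
    (((hasFDerivAt_expo k z).add (hasFDerivAt_expo k' z)).log hne)).congr_deriv ?_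
  simp only [Pi.add_apply, smul_add, add_apply, smul_apply, Complex.reCLM_apply, Complex.one_re,
    smul_eq_mul, mul_one, Complex.imCLM_apply, Complex.one_im, mul_zero, add_zero, kinkFun]
  field_simp

lemma hasDerivAt_slice_re_bddSmooth (f : bddSmooth ℂ) (z : ℂ) :
    HasDerivAt (fun s : ℝ => f.1 ⟨s, z.im⟩) ((bddSmooth.lineDeriv 1 f).1 z) z.re :=
  hasDerivAt_slice_re (bddSmooth.differentiable f z).hasFDerivAt

lemma pX_log_Ptau (h₁₂ : κ₁ < κ₂) (h₂₃ : κ₂ < κ₃) (h₃₄ : κ₃ < κ₄) {H : bddSmooth ℂ}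
    (hH : H * dressing κ₁ κ₂ κ₃ κ₄ = 1) (z : ℂ) :
    pX (fun a b => Real.log (Ptau κ₁ κ₂ κ₃ κ₄ a b)) z.re z.im =
      (kink κ₂ κ₃ + (kink κ₁ κ₄ + bddSmooth.lineDeriv 1 (dressing κ₁ κ₂ κ₃ κ₄) * H)).1 z := by
  have hlog (s : ℝ) : Real.log (Ptau κ₁ κ₂ κ₃ κ₄ s z.im) =
      Real.log (expo κ₂ ⟨s, z.im⟩ + expo κ₃ ⟨s, z.im⟩) +
        Real.log (expo κ₁ ⟨s, z.im⟩ + expo κ₄ ⟨s, z.im⟩) +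
        Real.log ((dressing κ₁ κ₂ κ₃ κ₄).1 ⟨s, z.im⟩) := by
    have hne (k k' : ℝ) : expo k ⟨s, z.im⟩ + expo k' ⟨s, z.im⟩ ≠ 0 :=
      (add_pos (expo_pos _ _) (expo_pos _ _)).ne'
    rw [Ptau_eq (h₁₂.trans (h₂₃.trans h₃₄)) ⟨s, z.im⟩,
      Real.log_mul (mul_ne_zero (hne _ _) (hne _ _)) (dressing_pos h₁₂ h₂₃ h₃₄ _).ne',
      Real.log_mul (hne _ _) (hne _ _)]
  have hH_apply : H.1 z = ((dressing κ₁ κ₂ κ₃ κ₄).1 z)⁻¹ :=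
    eq_inv_of_mul_eq_one_left congr(($hH).1 z)
  simp only [pX, hlog]
  refine (((hasDerivAt_log_expo_add_expo κ₂ κ₃ z).add (hasDerivAt_log_expo_add_expo κ₁ κ₄ z)).add
    ((hasDerivAt_slice_re_bddSmooth _ z).log (dressing_pos h₁₂ h₂₃ h₃₄ z).ne')).deriv.trans ?_
  rw [div_eq_mul_inv, ← hH_apply, add_assoc]
  rfl

lemma Pu2_eq (h₁₂ : κ₁ < κ₂) (h₂₃ : κ₂ < κ₃) (h₃₄ : κ₃ < κ₄) {H : bddSmooth ℂ}
    (hH : H * dressing κ₁ κ₂ κ₃ κ₄ = 1) (z : ℂ) :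
    Pu2 κ₁ κ₂ κ₃ κ₄ z.re z.im = (2 * bddSmooth.lineDeriv 1 (kink κ₂ κ₃) + 2 * bddSmooth.lineDeriv 1
      (kink κ₁ κ₄ + bddSmooth.lineDeriv 1 (dressing κ₁ κ₂ κ₃ κ₄) * H)).1 z := by
  have hslice (s : ℝ) := pX_log_Ptau h₁₂ h₂₃ h₃₄ hH ⟨s, z.im⟩
  rw [Pu2, pX]
  simp only [hslice]
  rw [(hasDerivAt_slice_re_bddSmooth _ z).deriv, map_add, ← mul_add]
  rfl

end PType

/-! ### Distributional solutions -/

section Divergence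
variable {𝕜 C M : Type*} [CommRing 𝕜] [CommRing C] [Algebra 𝕜 C] {d : DerivationPair 𝕜 C}
  [AddCommGroup M] [Module 𝕜 M] [Module C M] [IsScalarTower 𝕜 C M]

/-- The stationary linearized KP-II operator acting on the perturbation `∇_X² W` of the solution,
whereas `linearizedKP` acts on `W`. -/
def linearizedKPDiv (D : FlatConnection d M) (b₁ b₂ : 𝕜) (u : C) : Module.End 𝕜 M :=
  (3 : 𝕜) • D.Y ^ 2 - (4 * b₂) • (D.Y * D.X) + D.X ^ 4 - (4 * b₁) • D.X ^ 2
    + D.X ^ 2 * ((6 * u) • (1 : Module.End 𝕜 M))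

lemma linearizedKPDiv_mul_X_sq (D : FlatConnection d M) (b₁ b₂ : 𝕜) (u : C) :
    linearizedKPDiv D b₁ b₂ u * D.X ^ 2 = D.X ^ 2 * linearizedKP D b₁ b₂ u := by
  have hXY : Commute D.X D.Y := LinearMap.ext D.comm
  have hYY : D.Y ^ 2 * D.X ^ 2 = D.X ^ 2 * D.Y ^ 2 := (hXY.pow_pow 2 2).symm
  have hYX : D.Y * D.X * D.X ^ 2 = D.X ^ 2 * (D.Y * D.X) :=
    ((hXY.pow_left 2).mul_right ((Commute.refl D.X).pow_left 2)).symm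
  simp only [linearizedKPDiv, linearizedKP, add_mul, sub_mul, mul_add, mul_sub, smul_mul_assoc,
    mul_smul_comm, hYY, hYX, ← pow_add, mul_assoc, one_mul]

lemma injective_linearizedKPDiv {D : FlatConnection d M} (hX : IsUnit D.X) {b₁ b₂ : 𝕜} {u : C}
    (h : Function.Injective (linearizedKP D b₁ b₂ u)) :
    Function.Injective (linearizedKPDiv D b₁ b₂ u) := by
  have hX2 : Function.Bijective ⇑(D.X ^ 2) := (Module.End.isUnit_iff _).1 (hX.pow 2)
  have hcomp : Function.Injective (linearizedKPDiv D b₁ b₂ u ∘ ⇑(D.X ^ 2)) := by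
    have heq := congr_arg DFunLike.coe (linearizedKPDiv_mul_X_sq D b₁ b₂ u)
    rw [Module.End.coe_mul, Module.End.coe_mul] at heq
    exact heq ▸ hX2.1.comp h
  exact (Function.Injective.of_comp_iff' _ hX2).1 hcomp

end Divergence

section TestFunctions
open SchwartzMap LineDeriv
open scoped SchwartzMap

/-- The conjugate `e^{-⟨c, x⟩} ∂_v e^{⟨c, x⟩}` on test functions, for any `c` with `⟨c, v⟩ = a`. -/
noncomputable def testDeriv {E : Type*} [NormedAddCommGroup E] [NormedSpace ℝ E] (v : E) (a : ℝ) :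
    Module.End ℝ 𝓢(E, ℂ) :=
  (lineDerivOpCLM ℝ 𝓢(E, ℂ) v : 𝓢(E, ℂ) →ₗ[ℝ] 𝓢(E, ℂ)) + a • 1

/-- The transpose of `linearizedKPDiv`. -/
noncomputable def linearizedKPTest (a b b₁ b₂ : ℝ) (u : bddSmooth ℂ) (φ : 𝓢(ℂ, ℂ)) : 𝓢(ℂ, ℂ) :=
  (3 : ℝ) • testDeriv Complex.I b (testDeriv Complex.I b φ)
    - (4 * b₂) • testDeriv 1 a (testDeriv Complex.I b φ)
    + testDeriv 1 a (testDeriv 1 a (testDeriv 1 a (testDeriv 1 a φ)))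
    - (4 * b₁) • testDeriv 1 a (testDeriv 1 a φ)
    + mulSchwartz (6 * u) (testDeriv 1 a (testDeriv 1 a φ))

lemma linearizedKPDiv_weightedConnection_apply (a b b₁ b₂ : ℝ) (u : bddSmooth ℂ)
    (f : finiteOrder ℂ) (φ : 𝓢(ℂ, ℂ)) :
    (linearizedKPDiv (weightedConnection (1 : ℂ) Complex.I a b) b₁ b₂ u f).1 φ =
      f.1 (linearizedKPTest a b b₁ b₂ u φ) := by
  have X_apply (g : finiteOrder ℂ) (φ : 𝓢(ℂ, ℂ)) :
      ((weightedConnection (1 : ℂ) Complex.I a b).X g).1 φ = -g.1 (testDeriv 1 a φ) :=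
    (weightedDeriv_apply 1 a g φ).trans (map_neg _ _)
  have Y_apply (g : finiteOrder ℂ) (φ : 𝓢(ℂ, ℂ)) :
      ((weightedConnection (1 : ℂ) Complex.I a b).Y g).1 φ = -g.1 (testDeriv Complex.I b φ) :=
    (weightedDeriv_apply Complex.I b g φ).trans (map_neg _ _)
  set D := weightedConnection (1 : ℂ) Complex.I a b
  change (3 : ℝ) • (D.Y (D.Y f)).1 φ - (4 * b₂) • (D.Y (D.X f)).1 φ +
    (D.X (D.X (D.X (D.X f)))).1 φ - (4 * b₁) • (D.X (D.X f)).1 φ +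
    (D.X (D.X ((6 * u) • f))).1 φ = _
  have map_smul' (c : ℝ) (ψ : 𝓢(ℂ, ℂ)) : f.1 (c • ψ) = c • f.1 ψ :=
    ContinuousLinearMap.map_smul_of_tower f.1 c ψ
  simp only [X_apply, Y_apply, bddSmooth_smul_apply, neg_neg, linearizedKPTest, map_add, map_sub,
    map_smul']

/-- The real test function `e^{aX + bY} ℓ(φ(X + iY))`. -/
noncomputable def weightedTest (a b : ℝ) (ℓ : ℂ →L[ℝ] ℝ) (φ : 𝓢(ℂ, ℂ)) (x y : ℝ) : ℝ :=
  Real.exp (a * x + b * y) * ℓ (φ ⟨x, y⟩)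

variable {a b : ℝ} (ℓ : ℂ →L[ℝ] ℝ) (φ : 𝓢(ℂ, ℂ))

lemma testDeriv_apply {E : Type*} [NormedAddCommGroup E] [NormedSpace ℝ E] (v : E) (a : ℝ)
    (φ : 𝓢(E, ℂ)) (x : E) : testDeriv v a φ x = fderiv ℝ φ x v + a • φ x := by
  change (∂_{v} φ) x + a • φ x = _
  rw [lineDerivOp_apply_eq_fderiv]

lemma hasDerivAt_exp_mul {f : ℝ → ℂ} {f' : ℂ} {a c t : ℝ} (hf : HasDerivAt f f' t) :
    HasDerivAt (fun s => Real.exp (a * s + c) * ℓ (f s))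
      (Real.exp (a * t + c) * ℓ (f' + a • f t)) t := by
  have hexp := (((hasDerivAt_id' t).const_mul a).add_const c).exp
  refine (hexp.mul (ℓ.hasFDerivAt.comp_hasDerivAt t hf)).congr_deriv ?_
  simp only [map_add, map_smul, smul_eq_mul, mul_one, Function.comp_apply]
  ring

lemma pX_weightedTest :
    pX (weightedTest a b ℓ φ) = weightedTest a b ℓ (testDeriv 1 a φ) := by
  ext x y
  have hφ := hasDerivAt_slice_re (z := ⟨x, y⟩) (φ.hasFDerivAt ⟨x, y⟩)
  rw [weightedTest, testDeriv_apply]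
  exact (hasDerivAt_exp_mul ℓ (a := a) (c := b * y) hφ).deriv

lemma pY_weightedTest :
    pY (weightedTest a b ℓ φ) = weightedTest a b ℓ (testDeriv Complex.I b φ) := by
  ext x y
  have hφ := hasDerivAt_slice_im (z := ⟨x, y⟩) (φ.hasFDerivAt ⟨x, y⟩)
  simp only [pY, weightedTest, testDeriv_apply, add_comm (a * x)]
  exact (hasDerivAt_exp_mul ℓ (a := b) (c := a * x) hφ).deriv

lemma contDiff_weightedTest :
    ContDiff ℝ (⊤ : ℕ∞) fun p : ℝ × ℝ => weightedTest a b ℓ φ p.1 p.2 := by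
  have h : ContDiff ℝ (⊤ : ℕ∞) fun p : ℝ × ℝ => ℓ (φ ⟨p.1, p.2⟩) :=
    ℓ.contDiff.comp ((φ.smooth _).comp Complex.equivRealProdCLM.symm.contDiff)
  exact ContDiff.mul (by fun_prop) h

lemma hasCompactSupport_weightedTest (hφ : HasCompactSupport φ) :
    HasCompactSupport fun p : ℝ × ℝ => weightedTest a b ℓ φ p.1 p.2 := by
  have h : HasCompactSupport fun p : ℝ × ℝ => φ ⟨p.1, p.2⟩ :=
    hφ.comp_homeomorph Complex.equivRealProdCLM.symm.toHomeomorph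
  exact (h.comp_left (map_zero ℓ)).mul_left

end TestFunctions

section WeakSolution
open SchwartzMap
open scoped SchwartzMap ContDiff

/-- `U` solves, in the sense of distributions, the stationary KP-II equation linearized at `u₂`. -/
def IsWeakSolution (b₁ b₂ : ℝ) (u₂ : ℝ → ℝ → ℝ) (U : ℝ → ℝ → ℂ) : Prop :=
  ∀ ψ : ℝ → ℝ → ℝ,
    ContDiff ℝ (⊤ : ℕ∞) (fun p : ℝ × ℝ => ψ p.1 p.2) →
    HasCompactSupport (fun p : ℝ × ℝ => ψ p.1 p.2) →
    (∫ p : ℝ × ℝ,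
      (U p.1 p.2 *
          ((3 * pY (pY ψ) p.1 p.2 - 4*b₂ * pX (pY ψ) p.1 p.2
              + pX (pX (pX (pX ψ))) p.1 p.2
              - 4*b₁ * pX (pX ψ) p.1 p.2 : ℝ) : ℂ)
        + 6 * ((u₂ p.1 p.2 : ℝ) : ℂ) * U p.1 p.2
            * ((pX (pX ψ) p.1 p.2 : ℝ) : ℂ))) = 0

lemma integral_comp_re_im (f : ℝ × ℝ → ℂ) : ∫ z : ℂ, f (z.re, z.im) = ∫ p : ℝ × ℝ, f p :=
  Complex.volume_preserving_equiv_real_prod.integral_comp' f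

variable {a b b₁ b₂ : ℝ} {u : bddSmooth ℂ} {u₂ : ℝ → ℝ → ℝ} {U : ℝ → ℝ → ℂ}

lemma apply_linearizedKPTest (ℓ : ℂ →L[ℝ] ℝ) (φ : 𝓢(ℂ, ℂ)) (z : ℂ) :
    ℓ (linearizedKPTest a b b₁ b₂ u φ z) =
      3 * ℓ (testDeriv Complex.I b (testDeriv Complex.I b φ) z)
        - 4 * b₂ * ℓ (testDeriv 1 a (testDeriv Complex.I b φ) z)
        + ℓ (testDeriv 1 a (testDeriv 1 a (testDeriv 1 a (testDeriv 1 a φ))) z)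
        - 4 * b₁ * ℓ (testDeriv 1 a (testDeriv 1 a φ) z)
        + 6 * u.1 z * ℓ (testDeriv 1 a (testDeriv 1 a φ) z) := by
  have h_mul (w : ℂ) : (6 * u).1 z * w = (6 * u.1 z) • w := by
    rw [Complex.real_smul]; rfl
  simp only [linearizedKPTest, add_apply, sub_apply, smul_apply, mulSchwartz_apply, h_mul,
    map_add, map_sub, map_smul, smul_eq_mul]

lemma IsWeakSolution.integral_linearizedKPTest_eq_zero (hweak : IsWeakSolution b₁ b₂ u₂ U)
    (hu : ∀ z : ℂ, u₂ z.re z.im = u.1 z) (ℓ : ℂ →L[ℝ] ℝ) {φ : 𝓢(ℂ, ℂ)}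
    (hφ : HasCompactSupport φ) :
    ∫ z : ℂ, U z.re z.im * (Real.exp (a * z.re + b * z.im) : ℂ) *
      (ℓ (linearizedKPTest a b b₁ b₂ u φ z) : ℂ) = 0 := by
  rw [← hweak (weightedTest a b ℓ φ) (contDiff_weightedTest ℓ φ)
    (hasCompactSupport_weightedTest ℓ φ hφ), ← integral_comp_re_im]
  refine integral_congr_ae (.of_forall fun z => ?_)
  simp only [pX_weightedTest, pY_weightedTest, weightedTest, hu, apply_linearizedKPTest]
  push_cast
  ring

lemma integral_mul_eq_zero_of_forall_functional {X : Type*} [MeasurableSpace X] {μ : Measure X}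
    {V Ψ : X → ℂ} (hV : MemLp V 2 μ) (hΨ : MemLp Ψ 2 μ)
    (h : ∀ ℓ : ℂ →L[ℝ] ℝ, ∫ x, V x * (ℓ (Ψ x) : ℂ) ∂μ = 0) : ∫ x, V x * Ψ x ∂μ = 0 := by
  have hint (ℓ : ℂ →L[ℝ] ℝ) : Integrable (fun x => V x * (ℓ (Ψ x) : ℂ)) μ :=
    hV.integrable_mul ((Complex.ofRealCLM.comp ℓ).comp_memLp' hΨ)
  calc ∫ x, V x * Ψ x ∂μ
      = ∫ x, (V x * (Complex.reCLM (Ψ x) : ℂ)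
          + V x * (Complex.imCLM (Ψ x) : ℂ) * Complex.I) ∂μ := by
        refine integral_congr_ae (.of_forall fun x => ?_)
        simp only [Complex.reCLM_apply, Complex.imCLM_apply, mul_assoc, ← mul_add,
          Complex.re_add_im]
    _ = 0 := by
        rw [integral_add (hint _) ((hint _).mul_const _), integral_mul_const, h, h, zero_mul,
          add_zero]

lemma memLp_two_mul_exp (hU : AEStronglyMeasurable fun p : ℝ × ℝ => U p.1 p.2)
    (hU2 : Integrable fun p : ℝ × ℝ => ‖U p.1 p.2‖ ^ 2 * Real.exp (2 * (a * p.1 + b * p.2))) :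
    MemLp (fun z : ℂ => U z.re z.im * (Real.exp (a * z.re + b * z.im) : ℂ)) 2 := by
  have hV : MemLp (fun p : ℝ × ℝ => U p.1 p.2 * (Real.exp (a * p.1 + b * p.2) : ℂ)) 2 := by
    have hexp : Continuous fun p : ℝ × ℝ => (Real.exp (a * p.1 + b * p.2) : ℂ) := by fun_prop
    refine (memLp_two_iff_integrable_sq_norm (hU.mul hexp.aestronglyMeasurable)).2 ?_
    refine hU2.congr (.of_forall fun p => ?_)
    simp only [Pi.mul_apply, norm_mul, mul_pow, Complex.norm_real,
      Real.norm_of_nonneg (Real.exp_pos _).le, ← Real.exp_nat_mul, Nat.cast_ofNat]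
  exact hV.comp_measurePreserving Complex.volume_preserving_equiv_real_prod

theorem IsWeakSolution.ae_eq_zero (hweak : IsWeakSolution b₁ b₂ u₂ U)
    (hu : ∀ z : ℂ, u₂ z.re z.im = u.1 z) (ha : a ≠ 0)
    (inj : Function.Injective (linearizedKP (weightedConnection (1 : ℂ) Complex.I a b) b₁ b₂ u))
    (hU : AEStronglyMeasurable fun p : ℝ × ℝ => U p.1 p.2)
    (hU2 : Integrable fun p : ℝ × ℝ => ‖U p.1 p.2‖ ^ 2 * Real.exp (2 * (a * p.1 + b * p.2))) :
    ∀ᵐ p : ℝ × ℝ, U p.1 p.2 = 0 := by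
  have hV := memLp_two_mul_exp hU hU2
  let F : finiteOrder ℂ := ⟨(hV.toLp : 𝓢'(ℂ, ℂ)), lp_mem_finiteOrder hV.toLp⟩
  have hKP : linearizedKPDiv (weightedConnection (1 : ℂ) Complex.I a b) b₁ b₂ u F = 0 := by
    refine Subtype.ext (eq_zero_of_forall_hasCompactSupport (Subtype.prop _) fun φ hφ => ?_)
    rw [linearizedKPDiv_weightedConnection_apply, Lp.toTemperedDistribution_apply,
      ← integral_mul_eq_zero_of_forall_functional hV (SchwartzMap.memLp _ 2 volume)
        fun ℓ => hweak.integral_linearizedKPTest_eq_zero hu ℓ hφ]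
    refine integral_congr_ae ?_
    filter_upwards [hV.coeFn_toLp] with z hz
    rw [hz, smul_eq_mul, mul_comm]
  have hF : F = 0 :=
    injective_linearizedKPDiv ((admissible_weightedConnection a b).isUnit_X ha) inj
      (hKP.trans (map_zero _).symm)
  have hV0 : hV.toLp = 0 := by
    rw [← Submodule.mem_bot ℂ, ← Lp.ker_toTemperedDistributionCLM_eq_bot]
    exact congr_arg Subtype.val hF
  have hUz : ∀ᵐ z : ℂ, U z.re z.im = 0 := by
    filter_upwards [(MemLp.toLp_eq_toLp_iff hV MemLp.zero).1 hV0] with z hz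
    exact (mul_eq_zero.1 hz).resolve_right (by exact_mod_cast (Real.exp_pos _).ne')
  exact Complex.volume_preserving_equiv_real_prod.symm.quasiMeasurePreserving.ae hUz

end WeakSolution

/-! ### Resonances of the weight -/

section Exponents

lemma charRoots_of_dispersion {𝕜 : Type*} [Field 𝕜] {k k' b₁ b₂ : 𝕜}
    (h : b₁ + (k + k') * b₂ = k ^ 2 + k * k' + k' ^ 2) :
    CharRoots k k' (b₂ - k - k') b₁ b₂ (k * k' * (b₂ - k - k')) :=
  ⟨by linear_combination h, by ring, rfl⟩

lemma CharRoots.prod_sub_eq {𝕜 : Type*} [Field 𝕜] {k k' s b₁ b₂ μ : 𝕜}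
    (hr : CharRoots k k' s b₁ b₂ μ) (x : 𝕜) :
    (x - k) * (x - k') * (x - s) = x ^ 3 - b₂ * x ^ 2 - b₁ * x - μ := by
  obtain ⟨rfl, rfl, rfl⟩ := hr
  ring

lemma CharRoots.ne_of_ne {𝕜 : Type*} [Field 𝕜]
    {κ₁ κ₂ κ₃ κ₄ s s' b₁ b₂ μ₁ μ₂ : 𝕜} (hr : CharRoots κ₂ κ₃ s b₁ b₂ μ₂)
    (hr' : CharRoots κ₁ κ₄ s' b₁ b₂ μ₁) (h₂₁ : κ₂ ≠ κ₁) (h₂₄ : κ₂ ≠ κ₄) (h₃₁ : κ₃ ≠ κ₁)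
    (h₃₄ : κ₃ ≠ κ₄) (h₂₃ : κ₂ ≠ κ₃) : μ₁ ≠ μ₂ := by
  rintro rfl
  have hprod (x : 𝕜) := (hr'.prod_sub_eq x).trans (hr.prod_sub_eq x).symm
  have h₂ : κ₂ = s' := by simpa [sub_eq_zero, h₂₁, h₂₄] using hprod κ₂
  have h₃ : κ₃ = s' := by simpa [sub_eq_zero, h₃₁, h₃₄] using hprod κ₃
  exact h₂₃ (h₂.trans h₃.symm)

lemma CharRoots.lt_or_add_lt {κ₁ κ₂ κ₃ κ₄ s s' b₁ b₂ μ₁ μ₂ α : ℝ}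
    (hr : CharRoots κ₂ κ₃ s b₁ b₂ μ₂) (hr' : CharRoots κ₁ κ₄ s' b₁ b₂ μ₁)
    (h₁₂ : κ₁ < κ₂) (h₂₃ : κ₂ < κ₃) (h₃₄ : κ₃ < κ₄) (hα : α < |s' - κ₄|) :
    s < κ₁ ∨ κ₃ + α < s := by
  have hprod (x : ℝ) :
      (x - κ₂) * (x - κ₃) * (x - s) = (x - κ₁) * (x - κ₄) * (x - s') + (μ₁ - μ₂) := by
    linear_combination hr.prod_sub_eq x - hr'.prod_sub_eq x
  have hμ : μ₁ ≠ μ₂ := hr.ne_of_ne hr' h₁₂.ne' (h₂₃.trans h₃₄).ne (h₁₂.trans h₂₃).ne' h₃₄.ne h₂₃.ne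
  rcases hμ.lt_or_gt with hlt | hgt
  · right
    have h_lt_s {x : ℝ} (hx : κ₃ < x) (h : (x - κ₁) * (x - κ₄) * (x - s') = 0) : x < s := by
      have hneg : (x - κ₂) * (x - κ₃) * (x - s) < 0 := by rw [hprod, h]; linarith
      exact sub_neg.1 (neg_of_mul_neg_right hneg (by nlinarith))
    have hs' : κ₃ < s' := by
      have hpos : 0 < (κ₃ - κ₁) * (κ₄ - κ₃) * (s' - κ₃) := by linarith [hprod κ₃]
      exact sub_pos.1 (pos_of_mul_pos_right hpos (by nlinarith))
    have hs₄ : κ₄ < s := h_lt_s h₃₄ (by ring)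
    have hs : s' < s := h_lt_s hs' (by ring)
    rcases abs_cases (s' - κ₄) with h | h <;> linarith
  · left
    have hpos : 0 < (κ₂ - κ₁) * (κ₃ - κ₁) * (κ₁ - s) := by linarith [hprod κ₁]
    exact sub_pos.1 (pos_of_mul_pos_right hpos (by nlinarith))

lemma nonresonant_of_lt_sub {k k' s α : ℝ} (hα : 0 < α) (hk : α < k' - k) (h : s - k ≠ α)
    (h' : s - k' ≠ α) : Nonresonant k k' s α := by
  rintro x (rfl | rfl | rfl) y (rfl | rfl)
  all_goals first | assumption | (intro hxy; linarith)

lemma abs_abs_sub_midpoint_sub {a b : ℝ} (hab : a ≤ b) (x : ℝ) :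
    |(|x - (a + b) / 2| - (b - a) / 2)| = min |x - a| |x - b| := by
  rcases abs_cases (|x - (a + b) / 2| - (b - a) / 2) with h | h <;>
    rcases abs_cases (x - (a + b) / 2) with h₀ | h₀ <;>
    rcases abs_cases (x - a) with h₁ | h₁ <;>
    rcases abs_cases (x - b) with h₂ | h₂ <;>
    rcases min_cases |x - a| |x - b| with h₃ | h₃ <;> linarith

lemma sqrt_sub_sq_div_four {a b : ℝ} (hab : a ≤ b) : √((b - a) ^ 2 / 4) = (b - a) / 2 := by
  rw [show (b - a) ^ 2 / 4 = ((b - a) / 2) ^ 2 by ring, Real.sqrt_sq (by linarith)]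

lemma CharRoots.nonresonant {κ₁ κ₂ κ₃ κ₄ s s' b₁ b₂ μ₁ μ₂ α : ℝ}
    (hr : CharRoots κ₂ κ₃ s b₁ b₂ μ₂) (hr' : CharRoots κ₁ κ₄ s' b₁ b₂ μ₁)
    (h₁₂ : κ₁ < κ₂) (h₂₃ : κ₂ < κ₃) (h₃₄ : κ₃ < κ₄) (hα : 0 < α) (hα₂₃ : α < √((κ₃ - κ₂) ^ 2 / 4))
    (hα₁₄ : α < |(|b₂ - 3 * ((κ₁ + κ₄) / 2)| - √((κ₄ - κ₁) ^ 2 / 4))|) :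
    Nonresonant κ₂ κ₃ s α ∧ Nonresonant κ₁ κ₄ s' α := by
  have hb₂ : b₂ - 3 * ((κ₁ + κ₄) / 2) = s' - (κ₁ + κ₄) / 2 := by rw [hr'.b₂_eq]; ring
  rw [sqrt_sub_sq_div_four h₂₃.le] at hα₂₃
  rw [sqrt_sub_sq_div_four (by linarith), hb₂, abs_abs_sub_midpoint_sub (by linarith),
    lt_min_iff] at hα₁₄
  have hs := hr.lt_or_add_lt hr' h₁₂ h₂₃ h₃₄ hα₁₄.2
  have ne_of_lt_abs {x : ℝ} (hx : α < |x|) : x ≠ α := by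
    rintro rfl
    exact (abs_of_pos hα ▸ hx).false
  constructor
  · apply nonresonant_of_lt_sub hα (by linarith) <;> intro h <;> rcases hs with hs | hs <;> linarith
  · exact nonresonant_of_lt_sub hα (by linarith) (ne_of_lt_abs hα₁₄.1) (ne_of_lt_abs hα₁₄.2)

end Exponents

theorem zero_not_eigenvalue_P_type_general {κ₁ κ₂ κ₃ κ₄ b₁ b₂ α m : ℝ}
    (h₁₂ : κ₁ < κ₂) (h₂₃ : κ₂ < κ₃) (h₃₄ : κ₃ < κ₄)
    (hb : b₁ + (κ₂ + κ₃) * b₂ = κ₂ ^ 2 + κ₂ * κ₃ + κ₃ ^ 2)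
    (hb' : b₁ + (κ₁ + κ₄) * b₂ = κ₁ ^ 2 + κ₁ * κ₄ + κ₄ ^ 2)
    (hα : Nonresonant κ₂ κ₃ (b₂ - κ₂ - κ₃) α) (hα' : Nonresonant κ₁ κ₄ (b₂ - κ₁ - κ₄) α)
    {U : ℝ → ℝ → ℂ} (hU : AEStronglyMeasurable fun p : ℝ × ℝ => U p.1 p.2)
    (hU2 : Integrable fun p : ℝ × ℝ => ‖U p.1 p.2‖ ^ 2 * Real.exp (2 * α * (p.1 + m * p.2)))
    (hweak : IsWeakSolution b₁ b₂ (Pu2 κ₁ κ₂ κ₃ κ₄) U) :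
    ∀ᵐ p : ℝ × ℝ, U p.1 p.2 = 0 := by
  have hr := charRoots_of_dispersion hb
  have hr' := charRoots_of_dispersion hb'
  have hμ := hr.ne_of_ne hr' h₁₂.ne' (h₂₃.trans h₃₄).ne (h₁₂.trans h₂₃).ne' h₃₄.ne h₂₃.ne
  have α_ne : α ≠ 0 := by simpa using (hα κ₂ (by simp) κ₂ (by simp)).symm
  obtain ⟨H, hH⟩ := (isUnit_dressing h₁₂ h₂₃ h₃₄).exists_left_inv
  have hD := admissible_weightedConnection α (α * m)
  have hQ := lineSoliton_kink κ₂ κ₃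
  have inj_vacuum := injective_linearizedKP_zero α (α * m) b₁ b₂
  have inj_line := hD.injective_linearizedKP_lineSoliton hQ hr h₂₃.ne hα inj_vacuum
  have inj_P := hD.injective_linearizedKP_twoSoliton hQ (lineSoliton_kink κ₁ κ₄) hH rfl hr hr' hμ
    hα' inj_line
  refine hweak.ae_eq_zero (Pu2_eq h₁₂ h₂₃ h₃₄ hH) α_ne inj_P hU ?_
  simpa only [mul_add, mul_assoc] using hU2

/-- λ = 0 is not an eigenvalue of the linearized KP-II operator
around a P-type 2-line soliton in the weighted space L²(e^{2αz₁}). -/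
theorem zero_not_eigenvalue_P_type
    (κ₁ κ₂ κ₃ κ₄ a₂₃ a₁₄ c₂₃ c₁₄ ω₂₃ ω₁₄ b₁ b₂ α : ℝ)
    (h12 : κ₁ < κ₂) (h23 : κ₂ < κ₃) (h34 : κ₃ < κ₄)
    (hne : κ₂ + κ₃ ≠ κ₁ + κ₄)
    (ha23 : a₂₃ = (κ₂ + κ₃)/2) (ha14 : a₁₄ = (κ₁ + κ₄)/2)
    (hc23 : c₂₃ = (κ₃ - κ₂)^2/4) (hc14 : c₁₄ = (κ₄ - κ₁)^2/4)
    (hω23 : ω₂₃ = κ₂^2 + κ₂*κ₃ + κ₃^2) (hω14 : ω₁₄ = κ₁^2 + κ₁*κ₄ + κ₄^2)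
    (hb1 : b₁ + 2*a₂₃*b₂ = ω₂₃) (hb2 : b₁ + 2*a₁₄*b₂ = ω₁₄)
    (hα0 : 0 < α) (hα1 : α < Real.sqrt c₂₃)
    (hα2 : α < |(|b₂ - 3*a₁₄| - Real.sqrt c₁₄)|)
    (U₂ : ℝ → ℝ → ℂ)
    (hUmeas : Measurable fun p : ℝ × ℝ => U₂ p.1 p.2)
    (hUL2 : Integrable fun p : ℝ × ℝ =>
      ‖U₂ p.1 p.2‖^2 * Real.exp (2*α*(p.1 + 2*a₂₃*p.2)))
    (hweak : ∀ ψ : ℝ → ℝ → ℝ,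
      ContDiff ℝ (⊤ : ℕ∞) (fun p : ℝ × ℝ => ψ p.1 p.2) →
      HasCompactSupport (fun p : ℝ × ℝ => ψ p.1 p.2) →
      (∫ p : ℝ × ℝ,
        (U₂ p.1 p.2 *
            ((3 * pY (pY ψ) p.1 p.2 - 4*b₂ * pX (pY ψ) p.1 p.2
                + pX (pX (pX (pX ψ))) p.1 p.2
                - 4*b₁ * pX (pX ψ) p.1 p.2 : ℝ) : ℂ)
          + 6 * ((Pu2 κ₁ κ₂ κ₃ κ₄ p.1 p.2 : ℝ) : ℂ) * U₂ p.1 p.2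
              * ((pX (pX ψ) p.1 p.2 : ℝ) : ℂ))) = 0) :
    ∀ᵐ p : ℝ × ℝ ∂volume, U₂ p.1 p.2 = 0 := by
  subst ha23 ha14 hc23 hc14 hω23 hω14
  have hb : b₁ + (κ₂ + κ₃) * b₂ = κ₂ ^ 2 + κ₂ * κ₃ + κ₃ ^ 2 := by linear_combination hb1
  have hb' : b₁ + (κ₁ + κ₄) * b₂ = κ₁ ^ 2 + κ₁ * κ₄ + κ₄ ^ 2 := by linear_combination hb2
  obtain ⟨hα₂₃, hα₁₄⟩ := (charRoots_of_dispersion hb).nonresonant (charRoots_of_dispersion hb')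
    h12 h23 h34 hα0 hα1 hα2
  exact zero_not_eigenvalue_P_type_general h12 h23 h34 hb hb' hα₂₃ hα₁₄
    hUmeas.aestronglyMeasurable hUL2 hweak
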